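/- Let X ⊆ ℝ² be a countable, uniformly discrete set with well-defined density ρ > 0, meaning that #(X ∩ B_R(0)) / vol(B_R(0)) → ρ as R → ∞. Then the following are equivalent: (1) there exist a lattice L ⊆ ℝ² of density ρ (that is, L = A·ℤ² for some invertible linear map A with |det A| = 1/ρ) and a bijection b : X → L with sup_{x∈X} ‖b(x) − x‖ < ∞; (2) there exist constants c₁, c₂ > 0 such that for every topological disk U ⊆ ℝ² (a compact set homeomorphic to the closed unit disk), |#(X ∩ U) − ρ·vol(U)| ≤ c₁ + c₂·H¹(∂U), where vol denotes Lebesgue measure, ∂U is the topological boundary of U, and H¹ is the one-dimensional Hausdorff measure. -/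

import Mathlib

open MeasureTheory

/-!
Sufficiency of displacement: if `X` is in bounded displacement to a lattice, transporting the
cells of the lattice along the bijection allocates to each point of `X` its own set of measure
`1 / ρ` near it.  Hence `#(X ∩ U)` and `ρ * vol U` differ by at most the number of points of `X`
near `∂U`, and that number is `O(1 + H¹(∂U))` because the boundary of a disk that is not small has
length at least `1` in every unit ball centred on it.

Sufficiency of discrepancy: tile the plane by large hexagonally adjacent bricks and match the
points of `X` with those of a square lattice of density `ρ` through Hall's theorem.  Hall's
condition compares the counts in a finite union of bricks with those in a neighbouring one, and
reduces to bounding the discrepancy of finite unions of bricks by a small multiple of their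
perimeter.  Passing to components, and then to holes, it is enough to treat connected unions of
bricks without holes.  Those are topological disks, since adding columns one after the other glues
rectangles along arcs: in the brick pattern no two tiles meet in a single point.
-/

namespace Laczkovich

/-! ### Circles in simply connected planar sets -/

section ContinuousLogarithm

variable {Y : Type*} [TopologicalSpace Y]

theorem sub_eq_sub_of_exp_comp_eq [PreconnectedSpace Y] {f g : Y → ℂ} (hf : Continuous f)
    (hg : Continuous g) (hfg : ∀ y, Complex.exp (f y) = Complex.exp (g y)) (a b : Y) :
    f a - g a = f b - g b := by
  have hexp : Complex.exp (f a - g a) = 1 := by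
    rw [Complex.exp_sub, hfg, div_self (Complex.exp_ne_zero _)]
  have heq : f = fun y => g y + (f a - g a) :=
    Complex.isCoveringMap_exp.eq_of_comp_eq hf (hg.add continuous_const)
      (funext fun y => Subtype.ext <| by
        change Complex.exp (f y) = Complex.exp (g y + (f a - g a))
        rw [Complex.exp_add, hexp, mul_one, hfg])
      a (add_sub_cancel (g a) (f a)).symm
  exact eq_sub_of_add_eq' (congrFun heq b).symm

theorem exists_continuous_exp_comp_eq [SimplyConnectedSpace Y] [LocallyPathConnectedSpace Y]
    {g : Y → ℂ} (hg : Continuous g) (hg0 : ∀ y, g y ≠ 0) :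
    ∃ f : Y → ℂ, Continuous f ∧ ∀ y, Complex.exp (f y) = g y := by
  obtain ⟨a⟩ : Nonempty Y := inferInstance
  obtain ⟨f, ⟨-, hf⟩, -⟩ := Complex.isCoveringMapOn_exp.existsUnique_continuousMap_lifts
    ⟨g, hg⟩ (a₀ := a) (Complex.exp_log (hg0 a)) hg0
  exact ⟨f, f.continuous, congrFun hf⟩

end ContinuousLogarithm

theorem not_exists_continuousOn_log_sub {c p : ℂ} {r : ℝ} (hp : dist p c < r) :
    ¬ ∃ g : ℂ → ℂ, ContinuousOn g (Metric.sphere c r) ∧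
      ∀ z ∈ Metric.sphere c r, Complex.exp (g z) = z - p := by
  rintro ⟨g, hg, hexp⟩
  have hr : 0 < r := dist_nonneg.trans_lt hp
  have hmem (t : ℝ) : circleMap c r t ∈ Metric.sphere c r := circleMap_mem_sphere c hr.le t
  have hsub (t : ℝ) : circleMap c r t - c = Complex.exp (Real.log r + t * Complex.I) := by
    rw [circleMap_sub_center, Complex.exp_add, ← Complex.ofReal_exp, Real.exp_log hr,
      circleMap_zero]
  have hne (t : ℝ) : circleMap c r t - c ≠ 0 := hsub t ▸ Complex.exp_ne_zero _
  have hslit (t : ℝ) : 1 - (p - c) / (circleMap c r t - c) ∈ Complex.slitPlane := by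
    have hlt : ‖(p - c) / (circleMap c r t - c)‖ < 1 := by
      rwa [norm_div, ← dist_eq_norm, ← dist_eq_norm, Metric.mem_sphere.1 (hmem t), div_lt_one hr]
    rw [sub_eq_add_neg]
    exact Complex.mem_slitPlane_of_norm_lt_one (by rwa [norm_neg])
  have hlog : Continuous fun t : ℝ => Real.log r + t * Complex.I +
      Complex.log (1 - (p - c) / (circleMap c r t - c)) := by
    have hcircle := continuous_circleMap c r
    exact (by fun_prop : Continuous fun t : ℝ => (Real.log r : ℂ) + t * Complex.I).add
      ((continuous_const.sub
        (continuous_const.div (hcircle.sub continuous_const) hne)).clog hslit)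
  have hexp_log (t : ℝ) : Complex.exp (g (circleMap c r t)) = Complex.exp (Real.log r +
      t * Complex.I + Complex.log (1 - (p - c) / (circleMap c r t - c))) := by
    rw [hexp _ (hmem t), Complex.exp_add, ← hsub,
      Complex.exp_log (Complex.slitPlane_ne_zero (hslit t)), mul_sub,
      mul_div_cancel₀ _ (hne t)]
    ring
  have hperiod := sub_eq_sub_of_exp_comp_eq
    (hg.comp_continuous (continuous_circleMap c r) hmem) hlog hexp_log 0 (2 * Real.pi)
  simp only [Function.comp_apply, (by simp [circleMap] :
    circleMap c r (2 * Real.pi) = circleMap c r 0)] at hperiod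
  apply Complex.two_pi_I_ne_zero
  push_cast at hperiod
  linear_combination hperiod

theorem mem_of_sphere_subset_complex {U : Set ℂ} [SimplyConnectedSpace U]
    [LocallyPathConnectedSpace U] {c p : ℂ} {r : ℝ} (hS : Metric.sphere c r ⊆ U)
    (hp : dist p c < r) : p ∈ U := by
  classical
  by_contra hpU
  obtain ⟨f, hf, hexp⟩ := exists_continuous_exp_comp_eq (g := fun z : U => (z : ℂ) - p)
    (by fun_prop) fun z => sub_ne_zero.2 fun h => hpU (h ▸ z.2)
  refine not_exists_continuousOn_log_sub hp
    ⟨fun z => if hz : z ∈ U then f ⟨z, hz⟩ else 0, ?_, fun z hz => ?_⟩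
  · refine ContinuousOn.mono ?_ hS
    rw [continuousOn_iff_continuous_domRestrict]
    exact hf.congr fun z => by simp
  · simp only [dif_pos (hS hz), hexp]

/-- The Euclidean plane. -/
abbrev Plane := EuclideanSpace ℝ (Fin 2)

theorem mem_of_sphere_subset {U : Set Plane} [SimplyConnectedSpace U]
    [LocallyPathConnectedSpace U] {c p : Plane} {r : ℝ} (hS : Metric.sphere c r ⊆ U)
    (hp : dist p c < r) : p ∈ U := by
  let e : Plane ≃ₗᵢ[ℝ] ℂ := Complex.orthonormalBasisOneI.repr.symm
  let eU : e '' U ≃ₜ U := (e.toHomeomorph.image U).symm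
  have : SimplyConnectedSpace (e '' U) := eU.toHomotopyEquiv.simplyConnectedSpace
  have : LocallyPathConnectedSpace (e '' U) := eU.isOpenEmbedding.locallyPathConnectedSpace
  have hmem : e p ∈ e '' U := by
    refine mem_of_sphere_subset_complex (c := e c) (r := r) ?_ (by rwa [e.dist_map])
    rw [← e.image_sphere]
    exact Set.image_mono hS
  exact e.injective.mem_set_image.1 hmem

theorem isPreconnected_of_sphere_dim_two (y : Plane) (r : ℝ) :
    IsPreconnected (Metric.sphere y r) :=
  isPreconnected_sphere (by
    rw [rank_eq_card_basis (EuclideanSpace.basisFun (Fin 2) ℝ).toBasis]; simp) y r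

theorem inter_frontier_nonempty_of_isPreconnected {α : Type*} [TopologicalSpace α]
    {s U : Set α} (hs : IsPreconnected s) (hU : (s ∩ U).Nonempty) (hUc : (s \ U).Nonempty) :
    (s ∩ frontier U).Nonempty := by
  by_contra hempty
  have hcov : s ⊆ interior U ∪ (closure U)ᶜ := fun z hz => by
    by_contra hzn
    rw [Set.mem_union, not_or, Set.mem_compl_iff, not_not] at hzn
    exact hempty ⟨z, hz, hzn.2, hzn.1⟩
  obtain ⟨p, hps, hpU⟩ := hU
  obtain ⟨q, hqs, hqU⟩ := hUc
  rcases hs.subset_or_subset isOpen_interior isClosed_closure.isOpen_compl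
    (disjoint_compl_right.mono_left interior_subset_closure) hcov with h | h
  · exact hqU (interior_subset (h hqs))
  · exact h hps (subset_closure hpU)

/-! ### The boundary of a disk is long near each of its points -/

theorem ofReal_le_hausdorffMeasure_of_forall_dist {E : Type*} [MetricSpace E]
    [MeasurableSpace E] [BorelSpace E] {s : Set E} {y : E} {R : ℝ}
    (hs : ∀ r ∈ Set.Ioo 0 R, ∃ z ∈ s, dist z y = r) :
    ENNReal.ofReal R ≤ μH[1] (s ∩ Metric.ball y R) := by
  have hsub : Set.Ioo 0 R ⊆ (dist · y) '' (s ∩ Metric.ball y R) := fun r hr => by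
    obtain ⟨z, hz, rfl⟩ := hs r hr
    exact ⟨z, ⟨hz, hr.2⟩, rfl⟩
  have hLip := (LipschitzWith.dist_left y).hausdorffMeasure_image_le (d := 1) zero_le_one
    (s ∩ Metric.ball y R)
  rw [hausdorffMeasure_real] at hLip
  simpa using (measure_mono hsub).trans hLip

theorem subset_ball_of_disjoint_sphere {U : Set Plane} (hU : IsClosed U)
    [SimplyConnectedSpace U] [LocallyPathConnectedSpace U] {y : Plane} (hy : y ∈ frontier U)
    {r : ℝ} (hr : 0 < r) (hdisj : ∀ z ∈ frontier U, dist z y ≠ r) : U ⊆ Metric.ball y r := by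
  have hsphere_off : ∀ z ∈ Metric.sphere y r, z ∉ U := by
    intro z hz hzU
    have hsphere_sub : Metric.sphere y r ⊆ U := fun w hw => by
      by_contra hwU
      obtain ⟨v, hv, hvU⟩ := inter_frontier_nonempty_of_isPreconnected
        (isPreconnected_of_sphere_dim_two y r) ⟨z, hz, hzU⟩ ⟨w, hw, hwU⟩
      exact hdisj v hvU hv
    have hball : Metric.ball y r ⊆ U := fun p hp => mem_of_sphere_subset hsphere_sub hp
    exact hy.2 (mem_interior.2 ⟨_, hball, Metric.isOpen_ball, Metric.mem_ball_self hr⟩)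
  have hUconn : IsPreconnected U := isPreconnected_iff_preconnectedSpace.2 inferInstance
  by_contra hsub
  obtain ⟨w, hw, hwball⟩ := Set.not_subset.1 hsub
  obtain ⟨v, hv, hvball⟩ := inter_frontier_nonempty_of_isPreconnected hUconn
    ⟨y, hU.frontier_subset hy, Metric.mem_ball_self hr⟩ ⟨w, hw, hwball⟩
  exact hsphere_off v (by rwa [frontier_ball y hr.ne'] at hvball) hv

theorem subset_ball_or_one_le_hausdorffMeasure {U : Set Plane} (hU : IsClosed U)
    [SimplyConnectedSpace U] [LocallyPathConnectedSpace U] {y : Plane} (hy : y ∈ frontier U) :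
    U ⊆ Metric.ball y 1 ∨ 1 ≤ μH[1] (frontier U ∩ Metric.ball y 1) := by
  by_cases hall : ∀ r ∈ Set.Ioo (0 : ℝ) 1, ∃ z ∈ frontier U, dist z y = r
  · exact .inr (by simpa using ofReal_le_hausdorffMeasure_of_forall_dist hall)
  · push Not at hall
    obtain ⟨r, hr, hdisj⟩ := hall
    exact .inl ((subset_ball_of_disjoint_sphere hU hy hr.1 hdisj).trans
      (Metric.ball_subset_ball hr.2.le))

/-! ### Allocations -/

section Allocation

open ENNReal

variable {E : Type*} [NormedAddCommGroup E] [MeasurableSpace E] {μ : Measure E} {X : Set E}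
  {v : ℝ≥0∞} {D : ℝ} {own : E → E}

/-- The map `own` allocates to each point of `X` a measurable cell `own ⁻¹' {x}` of volume `v`,
all of whose points are within distance `D` of `x`. -/
structure IsAllocation (μ : Measure E) (X : Set E) (v : ℝ≥0∞) (D : ℝ) (own : E → E) : Prop where
  mem (p : E) : own p ∈ X
  dist_le (p : E) : dist (own p) p ≤ D
  measurableSet_preimage {x : E} : x ∈ X → MeasurableSet (own ⁻¹' {x})
  measure_preimage_singleton {x : E} : x ∈ X → μ (own ⁻¹' {x}) = v

namespace IsAllocation

theorem nonneg (h : IsAllocation μ X v D own) : 0 ≤ D := dist_nonneg.trans (h.dist_le 0)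

theorem measureReal_preimage (h : IsAllocation μ X v D own) {S : Set E} (hS : S ⊆ X)
    (hSfin : S.Finite) : μ.real (own ⁻¹' S) = S.ncard * v.toReal := by
  lift S to Finset E using hSfin
  rw [measureReal_def, ← sum_measure_preimage_singleton S
    fun x hx => h.measurableSet_preimage (hS hx),
    Finset.sum_congr rfl fun x hx => h.measure_preimage_singleton (hS hx)]
  simp

theorem measure_preimage_ne_top (h : IsAllocation μ X v D own) (hv : v ≠ ∞) {S : Set E}
    (hS : S ⊆ X) (hSfin : S.Finite) : μ (own ⁻¹' S) ≠ ∞ := by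
  lift S to Finset E using hSfin
  rw [← sum_measure_preimage_singleton S fun x hx => h.measurableSet_preimage (hS hx),
    Finset.sum_congr rfl fun x hx => h.measure_preimage_singleton (hS hx)]
  exact (ENNReal.sum_lt_top.2 fun _ _ => hv.lt_top).ne

theorem comp_equiv {L : Set E} {own : E → E} (h : IsAllocation μ L v D own) (b : X ≃ L) {C : ℝ}
    (hb : ∀ x : X, ‖(b x : E) - x‖ ≤ C) :
    IsAllocation μ X v (C + D) fun p => b.symm ⟨own p, h.mem p⟩ := by
  have hpre (x : E) (hx : x ∈ X) :
      (fun p => (b.symm ⟨own p, h.mem p⟩ : E)) ⁻¹' {x} = own ⁻¹' {(b ⟨x, hx⟩ : E)} := by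
    ext p
    have hiff := b.symm_apply_eq (x := ⟨own p, h.mem p⟩) (y := ⟨x, hx⟩)
    rwa [Subtype.ext_iff, Subtype.ext_iff] at hiff
  refine ⟨fun p => Subtype.coe_prop _, fun p => ?_, fun {x} hx => ?_, fun {x} hx => ?_⟩
  · have hdisp := hb (b.symm ⟨own p, h.mem p⟩)
    rw [Equiv.apply_symm_apply, ← dist_eq_norm, dist_comm] at hdisp
    exact (dist_triangle _ _ _).trans (add_le_add hdisp (h.dist_le p))
  · exact hpre x hx ▸ h.measurableSet_preimage (b ⟨x, hx⟩).2
  · exact hpre x hx ▸ h.measure_preimage_singleton (b ⟨x, hx⟩).2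

theorem image [NormedSpace ℝ E] [FiniteDimensional ℝ E] [BorelSpace E] [μ.IsAddHaarMeasure]
    (h : IsAllocation μ X v D own) (A : E ≃L[ℝ] E) :
    IsAllocation μ (A '' X) (ENNReal.ofReal |LinearMap.det (A : E →ₗ[ℝ] E)| * v)
      (‖(A : E →L[ℝ] E)‖ * D) (A ∘ own ∘ A.symm) := by
  have hpre (x : E) : (A ∘ own ∘ A.symm) ⁻¹' {A x} = A '' (own ⁻¹' {x}) := by
    ext p
    simp [A.image_eq_preimage_symm]
  refine ⟨fun p => Set.mem_image_of_mem A (h.mem _), fun p => ?_, ?_, ?_⟩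
  · have hle := (A : E →L[ℝ] E).le_of_opNorm_le_of_le le_rfl
      ((dist_eq_norm (own (A.symm p)) (A.symm p)).symm.trans_le (h.dist_le (A.symm p)))
    simpa [dist_eq_norm] using hle
  · rintro _ ⟨x, hx, rfl⟩
    rw [hpre]
    exact A.toHomeomorph.measurableEmbedding.measurableSet_image.2 (h.measurableSet_preimage hx)
  · rintro _ ⟨x, hx, rfl⟩
    rw [hpre, ← h.measure_preimage_singleton hx]
    exact Measure.addHaar_image_linearMap μ (A : E →ₗ[ℝ] E) _

theorem exists_ncard_inter_closedBall_le [NormedSpace ℝ E] [FiniteDimensional ℝ E] [BorelSpace E]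
    [μ.IsAddHaarMeasure] (h : IsAllocation μ X v D own) (hv : 0 < v.toReal)
    (hX : ∀ s, Bornology.IsBounded s → (X ∩ s).Finite) (R : ℝ) :
    ∃ M : ℕ, ∀ p, (X ∩ Metric.closedBall p R).ncard ≤ M := by
  refine ⟨⌊μ.real (Metric.closedBall 0 (D + R)) / v.toReal⌋₊, fun p => Nat.le_floor ?_⟩
  have hsub : own ⁻¹' (X ∩ Metric.closedBall p R) ⊆ Metric.closedBall p (D + R) := fun q hq =>
    (dist_triangle_left q p (own q)).trans (add_le_add (h.dist_le q) hq.2)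
  rw [le_div_iff₀ hv, ← h.measureReal_preimage Set.inter_subset_left
    (hX _ Metric.isBounded_closedBall), ← Measure.addHaar_real_closedBall_center μ p]
  exact measureReal_mono hsub measure_closedBall_lt_top.ne

theorem own_mem_cthickening_frontier [NormedSpace ℝ E] (h : IsAllocation μ X v D own) {U : Set E}
    {p : E} (hp : own p ∈ U ∧ p ∉ U ∨ p ∈ U ∧ own p ∉ U) :
    own p ∈ Metric.cthickening D (frontier U) := by
  have hown : own p ∈ Metric.closedBall (own p) D := Metric.mem_closedBall_self h.nonneg
  have hball : p ∈ Metric.closedBall (own p) D := Metric.mem_closedBall'.2 (h.dist_le p)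
  have hconn := (convex_closedBall (own p) D).isPreconnected
  obtain ⟨y, hyball, hy⟩ : (Metric.closedBall (own p) D ∩ frontier U).Nonempty := by
    rcases hp with hp | hp
    · exact inter_frontier_nonempty_of_isPreconnected hconn ⟨_, hown, hp.1⟩ ⟨_, hball, hp.2⟩
    · exact inter_frontier_nonempty_of_isPreconnected hconn ⟨_, hball, hp.1⟩ ⟨_, hown, hp.2⟩
  exact Metric.mem_cthickening_of_dist_le _ y _ _ hy (Metric.mem_closedBall'.1 hyball)

theorem abs_ncard_sub_le [NormedSpace ℝ E] [OpensMeasurableSpace E] [IsFiniteMeasureOnCompacts μ]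
    {ρ : ℝ} (hρ : 0 < ρ) (h : IsAllocation μ X (ENNReal.ofReal (1 / ρ)) D own)
    (hX : ∀ s, Bornology.IsBounded s → (X ∩ s).Finite) {U : Set E} (hU : IsCompact U) :
    |((X ∩ U).ncard : ℝ) - ρ * (μ U).toReal| ≤
      (X ∩ Metric.cthickening D (frontier U)).ncard := by
  set T := X ∩ Metric.cthickening D (frontier U)
  have hTfin : T.Finite := hX _ (hU.isBounded.subset hU.isClosed.frontier_subset).cthickening
  have hUfin : (X ∩ U).Finite := hX _ hU.isBounded
  have hv : (ENNReal.ofReal (1 / ρ)).toReal = 1 / ρ := ENNReal.toReal_ofReal (by positivity)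
  have hlow : (((X ∩ U) \ T).ncard : ℝ) ≤ ρ * (μ U).toReal := by
    have hsub : own ⁻¹' ((X ∩ U) \ T) ⊆ U := fun p hp => by
      by_contra hpU
      exact hp.2 ⟨hp.1.1, h.own_mem_cthickening_frontier (.inl ⟨hp.1.2, hpU⟩)⟩
    have hle := measureReal_mono (μ := μ) hsub hU.measure_ne_top
    rw [h.measureReal_preimage (Set.sdiff_subset.trans Set.inter_subset_left)
      (hUfin.subset Set.sdiff_subset), hv, mul_one_div, div_le_iff₀' hρ] at hle
    exact hle
  have hupp : ρ * (μ U).toReal ≤ ((X ∩ U) ∪ T).ncard := by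
    have hsub : U ⊆ own ⁻¹' ((X ∩ U) ∪ T) := fun p hp => by
      by_cases hpU : own p ∈ U
      · exact .inl ⟨h.mem p, hpU⟩
      · exact .inr ⟨h.mem p, h.own_mem_cthickening_frontier (.inr ⟨hp, hpU⟩)⟩
    have hXsub : (X ∩ U) ∪ T ⊆ X := Set.union_subset Set.inter_subset_left Set.inter_subset_left
    have hfin := hUfin.union hTfin
    have hle := measureReal_mono hsub (h.measure_preimage_ne_top ENNReal.ofReal_ne_top hXsub hfin)
    rw [h.measureReal_preimage hXsub hfin, hv, mul_one_div, le_div_iff₀' hρ] at hle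
    exact hle
  have hunion : (((X ∩ U) ∪ T).ncard : ℝ) ≤ (X ∩ U).ncard + T.ncard :=
    mod_cast Set.ncard_union_le _ _
  have hsdiff : ((X ∩ U).ncard : ℝ) ≤ ((X ∩ U) \ T).ncard + T.ncard :=
    mod_cast Set.ncard_le_ncard_sdiff_add_ncard _ _ hTfin
  rw [abs_le]
  constructor <;> linarith

end IsAllocation

end Allocation

theorem card_le_mul_measure_univ {α ι : Type*} [MeasurableSpace α] (ν : Measure α)
    (T : Finset ι) {B : ι → Set α} (hB : ∀ x ∈ T, MeasurableSet (B x))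
    (hone : ∀ x ∈ T, 1 ≤ ν (B x)) {M : ℕ} (hM : ∀ z, {x | x ∈ T ∧ z ∈ B x}.ncard ≤ M) :
    (T.card : ENNReal) ≤ M * ν Set.univ := by
  classical
  calc (T.card : ENNReal) = ∑ _ ∈ T, 1 := by simp
    _ ≤ ∑ x ∈ T, ∫⁻ z, (B x).indicator 1 z ∂ν :=
        Finset.sum_le_sum fun x hx => by rw [lintegral_indicator_one (hB x hx)]; exact hone x hx
    _ = ∫⁻ z, ∑ x ∈ T, (B x).indicator 1 z ∂ν :=
        (lintegral_finsetSum' T fun x hx => (measurable_one.indicator (hB x hx)).aemeasurable).symm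
    _ ≤ ∫⁻ _, M ∂ν := by
        refine lintegral_mono fun z => ?_
        have hcard := hM z
        rw [← T.coe_filter, Set.ncard_coe_finset] at hcard
        simpa [Set.indicator_apply, Finset.sum_boole] using hcard
    _ = M * ν Set.univ := lintegral_const _

theorem ncard_inter_cthickening_frontier_le {X : Set Plane} {D : ℝ} (hD : 0 ≤ D) {M : ℕ}
    (hX : ∀ s, Bornology.IsBounded s → (X ∩ s).Finite)
    (hM : ∀ p, (X ∩ Metric.closedBall p (D + 1)).ncard ≤ M) {U : Set Plane} (hU : IsCompact U)
    [SimplyConnectedSpace U] [LocallyPathConnectedSpace U] :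
    ((X ∩ Metric.cthickening D (frontier U)).ncard : ENNReal) ≤ M + M * μH[1] (frontier U) := by
  have hfront : IsCompact (frontier U) := hU.of_isClosed_subset isClosed_frontier
    hU.isClosed.frontier_subset
  have hball (p : Plane) := hX _ (Metric.isBounded_closedBall (x := p) (r := D + 1))
  rw [hfront.cthickening_eq_biUnion_closedBall hD]
  by_cases hsmall : ∃ y ∈ frontier U, U ⊆ Metric.ball y 1
  · obtain ⟨y, -, hyU⟩ := hsmall
    refine le_add_right (Nat.cast_le.2 ((Set.ncard_le_ncard ?_ (hball y)).trans (hM y)))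
    refine Set.inter_subset_inter_right X (Set.iUnion₂_subset fun z hz => ?_)
    exact Metric.closedBall_subset_closedBall' (by
      linarith [Metric.mem_ball.1 (hyU (hU.isClosed.frontier_subset hz))])
  · push Not at hsmall
    have hTfin : (X ∩ ⋃ y ∈ frontier U, Metric.closedBall y D).Finite := by
      rw [← hfront.cthickening_eq_biUnion_closedBall hD]
      exact hX _ hfront.isBounded.cthickening
    refine le_add_left ?_
    rw [Set.ncard_eq_toFinset_card _ hTfin, ← Measure.restrict_apply_univ (frontier U)]
    refine card_le_mul_measure_univ _ _ (B := fun x => Metric.closedBall x (D + 1))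
      (fun x _ => Metric.isClosed_closedBall.measurableSet) (fun x hx => ?_) fun z => ?_
    · obtain ⟨y, hy, hxy⟩ := Set.mem_iUnion₂.1 (hTfin.mem_toFinset.1 hx).2
      rw [Measure.restrict_apply Metric.isClosed_closedBall.measurableSet]
      refine ((subset_ball_or_one_le_hausdorffMeasure hU.isClosed hy).resolve_left
        (hsmall y hy)).trans (measure_mono ?_)
      rw [Set.inter_comm]
      exact Set.inter_subset_inter_left _ (Metric.ball_subset_closedBall.trans
        (Metric.closedBall_subset_closedBall' (by
          linarith [Metric.mem_closedBall'.1 hxy])))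
    · refine (Set.ncard_le_ncard (fun x hx => ?_) (hball z)).trans (hM z)
      exact ⟨(hTfin.mem_toFinset.1 hx.1).1, Metric.mem_closedBall_comm.1 hx.2⟩

/-! ### Bounded displacement from a lattice implies small discrepancy -/

theorem isAllocation_floor : IsAllocation volume {x : Plane | ∀ i, ∃ m : ℤ, x i = m} 1 2
    fun p => WithLp.toLp 2 fun i => (⌊p i⌋ : ℝ) := by
  have hcell {x : Plane} (hx : ∀ i, ∃ m : ℤ, x i = m) :
      (fun p : Plane => WithLp.toLp 2 fun i => (⌊p i⌋ : ℝ)) ⁻¹' {x} =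
        WithLp.ofLp ⁻¹' Set.univ.pi fun i => Set.Ico (x i) (x i + 1) := by
    choose m hm using hx
    ext p
    simp [PiLp.ext_iff, hm, Int.floor_eq_iff]
  have hmeas (x : Plane) : MeasurableSet (Set.univ.pi fun i => Set.Ico (x i) (x i + 1)) :=
    MeasurableSet.univ_pi fun i => measurableSet_Ico
  refine ⟨fun p i => ⟨_, rfl⟩, fun p => ?_, fun {x} hx => ?_, fun {x} hx => ?_⟩
  · rw [EuclideanSpace.dist_eq, Real.sqrt_le_left (by norm_num), Fin.sum_univ_two]
    have hsq (i : Fin 2) : dist (⌊p i⌋ : ℝ) (p i) ^ 2 ≤ 1 := by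
      rw [dist_comm, Real.dist_eq, ← Int.fract, abs_of_nonneg (Int.fract_nonneg _)]
      exact pow_le_one₀ (Int.fract_nonneg _) (Int.fract_lt_one _).le
    linarith [hsq 0, hsq 1]
  · exact hcell hx ▸ (PiLp.volume_preserving_ofLp (Fin 2)).measurable (hmeas x)
  · rw [hcell hx, (PiLp.volume_preserving_ofLp (Fin 2)).measure_preimage
      (hmeas x).nullMeasurableSet, Real.volume_pi_Ico]
    simp

/-- The upper bound in Laczkovich's discrepancy condition. -/
def HasDiscrepancyLE (X : Set Plane) (ρ c₁ c₂ : ℝ) : Prop :=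
  ∀ U : Set Plane, IsCompact U → Nonempty (U ≃ₜ (Metric.closedBall (0 : Plane) 1 : Set _)) →
    ENNReal.ofReal |((X ∩ U).ncard : ℝ) - ρ * (volume U).toReal| ≤
      ENNReal.ofReal c₁ + ENNReal.ofReal c₂ * μH[1] (frontier U)

theorem exists_hasDiscrepancyLE_of_isAllocation {X : Set Plane} {ρ : ℝ} (hρ : 0 < ρ)
    (hX : ∀ s, Bornology.IsBounded s → (X ∩ s).Finite) {D : ℝ} {own : Plane → Plane}
    (h : IsAllocation volume X (ENNReal.ofReal (1 / ρ)) D own) :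
    ∃ c > 0, HasDiscrepancyLE X ρ c c := by
  obtain ⟨M, hM⟩ := h.exists_ncard_inter_closedBall_le
    (by rw [ENNReal.toReal_ofReal] <;> positivity) hX (D + 1)
  refine ⟨M + 1, by positivity, fun U hU ⟨e⟩ => ?_⟩
  have : ContractibleSpace (Metric.closedBall (0 : Plane) 1) :=
    (convex_closedBall 0 1).contractibleSpace (by simp)
  have : SimplyConnectedSpace U := e.toHomotopyEquiv.simplyConnectedSpace
  have : LocallyPathConnectedSpace (Metric.closedBall (0 : Plane) 1) :=
    (convex_closedBall 0 1).locallyPathConnectedSpace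
  have : LocallyPathConnectedSpace U := e.isOpenEmbedding.locallyPathConnectedSpace
  have hMle : (M : ENNReal) ≤ ENNReal.ofReal (M + 1) := by
    rw [← ENNReal.ofReal_natCast]
    exact ENNReal.ofReal_le_ofReal (by linarith)
  calc ENNReal.ofReal |((X ∩ U).ncard : ℝ) - ρ * (volume U).toReal|
      ≤ ENNReal.ofReal (X ∩ Metric.cthickening D (frontier U)).ncard :=
        ENNReal.ofReal_le_ofReal (h.abs_ncard_sub_le hρ hX hU)
    _ = (X ∩ Metric.cthickening D (frontier U)).ncard := ENNReal.ofReal_natCast _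
    _ ≤ M + M * μH[1] (frontier U) := ncard_inter_cthickening_frontier_le h.nonneg hX hM hU
    _ ≤ _ := by gcongr

/-! ### Hall's theorem and discrepancy on graphs -/

section Hall

variable {V X Y : Type*}

theorem ncard_preimage_finset {f : X → V} (hf : ∀ v, (f ⁻¹' {v}).Finite) (H : Finset V) :
    (f ⁻¹' H).ncard = ∑ v ∈ H, (f ⁻¹' {v}).ncard := by
  classical
  induction H using Finset.induction_on with
  | empty => simp
  | insert v H hv ih =>
    rw [Finset.sum_insert hv, ← ih, Finset.coe_insert, Set.insert_eq, Set.preimage_union,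
      Set.ncard_union_eq _ (hf v) (H.finite_toSet.preimage' fun w _ => hf w)]
    exact Disjoint.preimage f (Set.disjoint_singleton_left.2 hv)

theorem exists_injective_of_ncard_preimage_le [DecidableEq V] {f : X → V} {g : Y → V}
    (hf : ∀ v, (f ⁻¹' {v}).Finite) (hg : ∀ v, (g ⁻¹' {v}).Finite) (N : V → Finset V)
    (hle : ∀ H : Finset V, (f ⁻¹' H).ncard ≤ (g ⁻¹' (H.biUnion N)).ncard) :
    ∃ φ : X → Y, φ.Injective ∧ ∀ x, g (φ x) ∈ N (f x) := by
  classical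
  have hfin (H : Finset V) : (g ⁻¹' H).Finite := H.finite_toSet.preimage' fun w _ => hg w
  have hHall (s : Finset X) :
      s.card ≤ (s.biUnion fun x => (hfin (N (f x))).toFinset).card := by
    have hbiUnion : (s.biUnion fun x => (hfin (N (f x))).toFinset) =
        (hfin ((s.image f).biUnion N)).toFinset := by
      ext y
      simp
    rw [hbiUnion, ← Set.ncard_eq_toFinset_card _ (hfin _), ← Set.ncard_coe_finset]
    refine (Set.ncard_le_ncard (fun x hx => ?_) ?_).trans (hle _)
    · exact Finset.mem_coe.2 (Finset.mem_image_of_mem f hx)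
    · exact (s.image f).finite_toSet.preimage' fun w _ => hf w
  obtain ⟨φ, hφ, hmem⟩ := (Finset.all_card_le_biUnion_card_iff_exists_injective _).1 hHall
  exact ⟨φ, hφ, fun x => (hfin _).mem_toFinset.1 (hmem x)⟩

end Hall

section EdgeBoundary

variable {V : Type*}

theorem card_sigma_neighborFinset_le {G : SimpleGraph V} [G.LocallyFinite] {d : ℕ}
    (hd : ∀ v, G.degree v ≤ d) (T : Finset V) :
    (T.sigma fun u => G.neighborFinset u).card ≤ d * T.card := by
  rw [Finset.card_sigma, mul_comm]
  exact Finset.sum_le_card_nsmul _ _ _ fun v _ => hd v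

variable [DecidableEq V] (G : SimpleGraph V) [G.LocallyFinite]

/-- The edges of `G` from `H` to its complement, oriented outwards. -/
def edgeBoundary (H : Finset V) : Finset (Σ _ : V, V) :=
  H.sigma fun u => G.neighborFinset u \ H

/-- The vertices of `H` together with their neighbors. -/
def closedNeighborhood (H : Finset V) : Finset V :=
  H.biUnion fun v => insert v (G.neighborFinset v)

variable {G} {H : Finset V}

theorem mem_edgeBoundary {u v : V} :
    (⟨u, v⟩ : Σ _ : V, V) ∈ edgeBoundary G H ↔ u ∈ H ∧ G.Adj u v ∧ v ∉ H := by
  simp [edgeBoundary]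

theorem subset_closedNeighborhood : H ⊆ closedNeighborhood G H := fun v hv =>
  Finset.mem_biUnion.2 ⟨v, hv, Finset.mem_insert_self _ _⟩

theorem mem_closedNeighborhood_of_adj {u v : V} (hu : u ∈ H) (huv : G.Adj u v) :
    v ∈ closedNeighborhood G H :=
  Finset.mem_biUnion.2 ⟨u, hu, Finset.mem_insert_of_mem ((G.mem_neighborFinset u v).2 huv)⟩

theorem card_edgeBoundary_le {d : ℕ} (hd : ∀ v, G.degree v ≤ d) :
    (edgeBoundary G H).card ≤ d * (closedNeighborhood G H \ H).card := by
  refine (Finset.card_le_card_of_injOn (fun e => ⟨e.2, e.1⟩) ?_ ?_).trans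
    (card_sigma_neighborFinset_le hd _)
  · rintro ⟨u, v⟩ he
    obtain ⟨hu, huv, hv⟩ := mem_edgeBoundary.1 he
    simpa [hv, huv.symm] using mem_closedNeighborhood_of_adj hu huv
  · rintro ⟨u, v⟩ - ⟨u', v'⟩ - h
    simp_all

theorem card_edgeBoundary_closedNeighborhood_le {d : ℕ} (hd : ∀ v, G.degree v ≤ d) :
    (edgeBoundary G (closedNeighborhood G H)).card ≤ d * (closedNeighborhood G H \ H).card := by
  refine (Finset.card_le_card ?_).trans (card_sigma_neighborFinset_le hd _)
  rintro ⟨u, v⟩ he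
  obtain ⟨hu, huv, hv⟩ := mem_edgeBoundary.1 he
  simpa [hu, huv] using fun huH => hv (mem_closedNeighborhood_of_adj huH huv)

theorem exists_bijective_adj_of_discrepancy {X Y : Type*} {d k : ℕ} {C : ℝ} (hC : 0 ≤ C)
    (hd : ∀ v, G.degree v ≤ d) (hdk : C * d ≤ k) {f : X → V} {g : Y → V}
    (hf : ∀ v, (f ⁻¹' {v}).Finite) (hg : ∀ v, (g ⁻¹' {v}).encard = k)
    (hdisc : ∀ H : Finset V,
      |∑ v ∈ H, (((f ⁻¹' {v}).ncard : ℝ) - k)| ≤ C * (edgeBoundary G H).card) :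
    ∃ b : X → Y, b.Bijective ∧ ∀ x, f x = g (b x) ∨ G.Adj (f x) (g (b x)) := by
  have hgfin (v : V) : (g ⁻¹' {v}).Finite :=
    Set.encard_ne_top_iff.1 (hg v ▸ ENat.natCast_ne_top k)
  have hgcard (H : Finset V) : (g ⁻¹' H).ncard = k * H.card := by
    rw [ncard_preimage_finset hgfin, Finset.sum_congr rfl fun v _ => (by simp [Set.ncard, hg] :
      (g ⁻¹' {v}).ncard = k), Finset.sum_const, smul_eq_mul, mul_comm]
  have hfcard (H : Finset V) :
      |((f ⁻¹' H).ncard : ℝ) - k * H.card| ≤ C * (edgeBoundary G H).card := by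
    convert hdisc H using 2
    simp [ncard_preimage_finset hf, mul_comm]
  have hbdry {b c : ℕ} (hb : b ≤ d * c) : C * b ≤ k * c :=
    calc C * b ≤ C * (d * c) := by gcongr; exact_mod_cast hb
      _ ≤ k * c := by rw [← mul_assoc]; gcongr
  have hcard (H : Finset V) : ((closedNeighborhood G H \ H).card : ℝ) + H.card =
      (closedNeighborhood G H).card := mod_cast Finset.card_sdiff_add_card_eq_card
        subset_closedNeighborhood
  obtain ⟨φ, hφ, hφmem⟩ := exists_injective_of_ncard_preimage_le hf hgfin
    (fun v => insert v (G.neighborFinset v)) fun H => by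
      have hle := (abs_le.1 (hfcard H)).2
      have hH := hbdry (card_edgeBoundary_le (H := H) hd)
      refine (Nat.cast_le (α := ℝ)).1 (le_trans ?_ (congrArg _ (hgcard _)).ge)
      rw [← closedNeighborhood, Nat.cast_mul, ← hcard]
      linarith
  obtain ⟨ψ, hψ, hψmem⟩ := exists_injective_of_ncard_preimage_le hgfin hf
    (fun v => insert v (G.neighborFinset v)) fun H => by
      have hle := (abs_le.1 (hfcard (closedNeighborhood G H))).1
      have hH := hbdry (card_edgeBoundary_closedNeighborhood_le (H := H) hd)
      refine (Nat.cast_le (α := ℝ)).1 ((congrArg _ (hgcard _)).le.trans ?_)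
      rw [← closedNeighborhood, Nat.cast_mul]
      rw [← hcard] at hle
      linarith
  refine Function.Embedding.schroeder_bernstein_of_rel hφ hψ
    (fun x y => f x = g y ∨ G.Adj (f x) (g y)) (fun x => ?_) fun y => ?_
  · simpa [eq_comm] using hφmem x
  · simpa [G.adj_comm] using hψmem y

end EdgeBoundary

/-! ### Reduction to connected sets without holes -/

section Connectedness

variable {V : Type*} {G : SimpleGraph V} {S T : Set V}

/-- Any two vertices of `S` are joined by a walk of `G` which stays in `S`. -/
def WalkConnected (G : SimpleGraph V) (S : Set V) : Prop :=
  ∀ u ∈ S, ∀ v ∈ S, ∃ p : G.Walk u v, ∀ w ∈ p.support, w ∈ S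

/-- The complement of `S` has no finite connected component: every finite set `A` outside `S` has
a neighbor outside `S` and `A`. -/
def HasNoHoles (G : SimpleGraph V) (S : Set V) : Prop :=
  ∀ A : Finset V, A.Nonempty → Disjoint (A : Set V) S → ∃ a ∈ A, ∃ b, b ∉ A ∧ b ∉ S ∧ G.Adj a b

theorem WalkConnected.of_forall_walk_from {u : V}
    (h : ∀ v ∈ S, ∃ p : G.Walk u v, ∀ w ∈ p.support, w ∈ S) : WalkConnected G S := by
  intro v hv w hw
  obtain ⟨p, hp⟩ := h v hv
  obtain ⟨q, hq⟩ := h w hw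
  refine ⟨p.reverse.append q, fun x hx => ?_⟩
  rw [SimpleGraph.Walk.mem_support_append_iff, SimpleGraph.Walk.support_reverse,
    List.mem_reverse] at hx
  exact hx.elim (hp x) (hq x)

theorem WalkConnected.union {u v : V} (hS : WalkConnected G S) (hT : WalkConnected G T)
    (hu : u ∈ S) (hv : v ∈ T) (huv : G.Adj u v) : WalkConnected G (S ∪ T) := by
  refine .of_forall_walk_from (u := u) fun w hw => ?_
  rcases hw with hw | hw
  · obtain ⟨p, hp⟩ := hS u hu w hw
    exact ⟨p, fun x hx => .inl (hp x hx)⟩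
  · obtain ⟨p, hp⟩ := hT v hv w hw
    refine ⟨.cons huv p, fun x hx => ?_⟩
    rw [SimpleGraph.Walk.support_cons, List.mem_cons] at hx
    exact hx.elim (fun h => .inl (h ▸ hu)) (fun h => .inr (hp x h))

theorem WalkConnected.exists_adj (hS : WalkConnected G S) (hT : T.Nonempty) (hTS : T ⊂ S) :
    ∃ u ∈ T, ∃ v ∈ S \ T, G.Adj u v := by
  obtain ⟨u, hu⟩ := hT
  obtain ⟨v, hvS, hvT⟩ := Set.exists_of_ssubset hTS
  obtain ⟨p, hp⟩ := hS u (hTS.1 hu) v hvS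
  obtain ⟨d, hd, hdT, hdT'⟩ := p.exists_boundary_dart T hu hvT
  exact ⟨d.fst, hdT, d.snd, ⟨hp _ (p.dart_snd_mem_support_of_mem_darts hd), hdT'⟩, d.adj⟩

theorem exists_not_adj_of_not_walkConnected (hS : ¬WalkConnected G S) :
    ∃ T ⊂ S, T.Nonempty ∧ ∀ u ∈ T, ∀ v ∈ S \ T, ¬G.Adj u v := by
  unfold WalkConnected at hS
  push Not at hS
  obtain ⟨u, hu, v, hv, huv⟩ := hS
  refine ⟨{w ∈ S | ∃ p : G.Walk u w, ∀ x ∈ p.support, x ∈ S},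
    ⟨Set.sep_subset _ _, fun hsub => ?_⟩, ⟨u, hu, .nil, by simpa using hu⟩, ?_⟩
  · obtain ⟨p, hp⟩ := (hsub hv).2
    obtain ⟨w, hw, hwS⟩ := huv p
    exact hwS (hp w hw)
  · rintro w ⟨-, p, hp⟩ x ⟨hxS, hx⟩ hwx
    refine hx ⟨hxS, p.concat hwx, fun y hy => ?_⟩
    rw [SimpleGraph.Walk.support_concat, List.mem_append, List.mem_singleton] at hy
    exact hy.elim (hp y) fun h => h ▸ hxS

end Connectedness

section Reduction

variable {V : Type*} [DecidableEq V] {G : SimpleGraph V} [G.LocallyFinite]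

theorem card_edgeBoundary_add_le_of_not_adj {H A : Finset V} (hA : A ⊆ H)
    (hadj : ∀ u ∈ A, ∀ v ∈ H \ A, ¬G.Adj u v) :
    (edgeBoundary G A).card + (edgeBoundary G (H \ A)).card ≤ (edgeBoundary G H).card := by
  have hdisj : Disjoint (edgeBoundary G A) (edgeBoundary G (H \ A)) := by
    rw [Finset.disjoint_left]
    rintro ⟨u, v⟩ he he'
    exact (Finset.mem_sdiff.1 (mem_edgeBoundary.1 he').1).2 (mem_edgeBoundary.1 he).1
  rw [← Finset.card_union_of_disjoint hdisj]
  refine Finset.card_le_card (Finset.union_subset ?_ ?_)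
  · rintro ⟨u, v⟩ he
    obtain ⟨hu, huv, hv⟩ := mem_edgeBoundary.1 he
    exact mem_edgeBoundary.2 ⟨hA hu, huv, fun hvH =>
      hadj u hu v (Finset.mem_sdiff.2 ⟨hvH, hv⟩) huv⟩
  · rintro ⟨u, v⟩ he
    obtain ⟨hu, huv, hv⟩ := mem_edgeBoundary.1 he
    refine mem_edgeBoundary.2 ⟨(Finset.mem_sdiff.1 hu).1, huv, fun hvH => ?_⟩
    by_cases hvA : v ∈ A
    · exact hadj v hvA u hu huv.symm
    · exact hv (Finset.mem_sdiff.2 ⟨hvH, hvA⟩)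

theorem card_edgeBoundary_add_le_of_hole {H A : Finset V} (hAH : Disjoint A H)
    (hadj : ∀ a ∈ A, ∀ b, b ∉ A → b ∉ H → ¬G.Adj a b) :
    (edgeBoundary G A).card + (edgeBoundary G (H ∪ A)).card ≤ (edgeBoundary G H).card := by
  let swap (e : Σ _ : V, V) : Σ _ : V, V := ⟨e.2, e.1⟩
  have hswap : Function.Injective swap := by
    rintro ⟨u, v⟩ ⟨u', v'⟩ h
    simp_all [swap]
  have hdisj : Disjoint ((edgeBoundary G A).image swap) (edgeBoundary G (H ∪ A)) := by
    rw [Finset.disjoint_left]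
    rintro ⟨v, u⟩ he he'
    have heA : (⟨u, v⟩ : Σ _ : V, V) ∈ edgeBoundary G A := by
      rwa [← hswap.mem_finset_image]
    exact (mem_edgeBoundary.1 he').2.2 (Finset.mem_union_right H (mem_edgeBoundary.1 heA).1)
  rw [← Finset.card_image_of_injective _ hswap, ← Finset.card_union_of_disjoint hdisj]
  refine Finset.card_le_card (Finset.union_subset (Finset.image_subset_iff.2 ?_) ?_)
  · rintro ⟨u, v⟩ he
    obtain ⟨hu, huv, hv⟩ := mem_edgeBoundary.1 he
    exact mem_edgeBoundary.2 ⟨by_contra fun hvH => hadj u hu v hv hvH huv, huv.symm,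
      Finset.disjoint_left.1 hAH hu⟩
  · rintro ⟨u, v⟩ he
    obtain ⟨hu, huv, hv⟩ := mem_edgeBoundary.1 he
    rw [Finset.mem_union, not_or] at hv
    refine mem_edgeBoundary.2 ⟨(Finset.mem_union.1 hu).resolve_right fun huA => ?_, huv, hv.1⟩
    exact hadj u huA v hv.2 hv.1 huv

theorem abs_sum_le_card_edgeBoundary {F : V → ℝ} {C : ℝ} (hC : 0 ≤ C)
    (hinf : ∀ H : Finset V, H.Nonempty → (edgeBoundary G H).Nonempty)
    (hF : ∀ H : Finset V, H.Nonempty → WalkConnected G (H : Set V) → HasNoHoles G (H : Set V) →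
      |∑ v ∈ H, F v| ≤ C * (edgeBoundary G H).card) (H : Finset V) :
    |∑ v ∈ H, F v| ≤ C * (edgeBoundary G H).card := by
  have hsplit {x y z : ℝ} {l m n : ℕ} (hx : |x| ≤ C * l) (hy : |y| ≤ C * m) (hlm : l + m ≤ n)
      (hz : |z| ≤ |x| + |y|) : |z| ≤ C * n := by
    have hle : C * ((l + m : ℕ) : ℝ) ≤ C * n := by gcongr
    push_cast at hle
    linarith
  induction hn : (edgeBoundary G H).card using Nat.strong_induction_on generalizing H with
  | _ n ih =>
    subst hn
    obtain rfl | hne := H.eq_empty_or_nonempty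
    · simpa using by positivity
    by_cases hconn : WalkConnected G (H : Set V)
    · by_cases hfill : HasNoHoles G (H : Set V)
      · exact hF H hne hconn hfill
      obtain ⟨A, hA, hAH, hadj⟩ : ∃ A : Finset V, A.Nonempty ∧ Disjoint A H ∧
          ∀ a ∈ A, ∀ b, b ∉ A → b ∉ H → ¬G.Adj a b := by
        simpa [HasNoHoles] using hfill
      have hcard := card_edgeBoundary_add_le_of_hole hAH hadj
      have hposA := (hinf A hA).card_pos
      have hposU := (hinf (H ∪ A) hA.inr).card_pos
      refine hsplit (ih _ (by lia) (H ∪ A) rfl) (ih _ (by lia) A rfl) (by lia) ?_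
      rw [Finset.sum_union hAH.symm]
      exact (congrArg _ (add_sub_cancel_right _ _)).ge.trans (abs_sub _ _)
    · obtain ⟨A, hAH, hA, hadj⟩ : ∃ A : Finset V, A ⊂ H ∧ A.Nonempty ∧
          ∀ u ∈ A, ∀ v ∈ H \ A, ¬G.Adj u v := by
        obtain ⟨T, hTH, hT, hadj⟩ := exists_not_adj_of_not_walkConnected hconn
        lift T to Finset V using H.finite_toSet.subset hTH.1
        exact ⟨T, mod_cast hTH, mod_cast hT, mod_cast hadj⟩
      have hcard := card_edgeBoundary_add_le_of_not_adj hAH.1 hadj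
      have hposA := (hinf A hA).card_pos
      have hposD := (hinf (H \ A) (Finset.sdiff_nonempty.2 hAH.2)).card_pos
      refine hsplit (ih _ (by lia) (H \ A) rfl) (ih _ (by lia) A rfl) (by lia) ?_
      rw [← Finset.sum_sdiff hAH.1]
      exact abs_add_le _ _

end Reduction

/-! ### The brick graph -/

/-- The adjacency graph of a brick wall: brick `(i, j)` is the `j`-th brick of column `i`, and each
column is shifted up by half a brick relative to the column on its left. Bricks are adjacent if
they share a nondegenerate boundary segment; unlike for the square grid, these are all the pairs of
touching bricks. -/
def brickGraph : SimpleGraph (ℤ × ℤ) where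
  Adj u v := u.1 = v.1 ∧ (v.2 = u.2 + 1 ∨ u.2 = v.2 + 1) ∨
    v.1 = u.1 + 1 ∧ (v.2 = u.2 ∨ v.2 = u.2 - 1) ∨
    u.1 = v.1 + 1 ∧ (u.2 = v.2 ∨ u.2 = v.2 - 1)
  symm := ⟨fun u v h => by lia⟩
  loopless := ⟨fun u h => by lia⟩

theorem brickGraph_adj {u v : ℤ × ℤ} :
    brickGraph.Adj u v ↔ u.1 = v.1 ∧ (v.2 = u.2 + 1 ∨ u.2 = v.2 + 1) ∨
      v.1 = u.1 + 1 ∧ (v.2 = u.2 ∨ v.2 = u.2 - 1) ∨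
      u.1 = v.1 + 1 ∧ (u.2 = v.2 ∨ u.2 = v.2 - 1) := Iff.rfl

theorem neighborSet_brickGraph (v : ℤ × ℤ) : brickGraph.neighborSet v =
    (({(v.1, v.2 + 1), (v.1, v.2 - 1), (v.1 + 1, v.2), (v.1 + 1, v.2 - 1), (v.1 - 1, v.2),
      (v.1 - 1, v.2 + 1)} : Finset (ℤ × ℤ)) : Set (ℤ × ℤ)) := by
  ext u
  simp only [SimpleGraph.mem_neighborSet, brickGraph_adj, Finset.coe_insert, Finset.coe_singleton,
    Set.mem_insert_iff, Set.mem_singleton_iff, Prod.ext_iff]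
  lia

noncomputable instance : brickGraph.LocallyFinite := fun v =>
  ((Finset.finite_toSet _).subset (neighborSet_brickGraph v).subset).fintype

theorem degree_brickGraph_le (v : ℤ × ℤ) : brickGraph.degree v ≤ 6 := by
  rw [← SimpleGraph.card_neighborFinset_eq_degree, ← Set.ncard_coe_finset,
    SimpleGraph.coe_neighborFinset, neighborSet_brickGraph, Set.ncard_coe_finset]
  exact Finset.card_le_six

theorem edgeBoundary_brickGraph_nonempty {H : Finset (ℤ × ℤ)} (hH : H.Nonempty) :
    (edgeBoundary brickGraph H).Nonempty := by
  obtain ⟨v, hv, hmax⟩ := H.exists_max_image Prod.snd hH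
  refine ⟨⟨v, (v.1, v.2 + 1)⟩, mem_edgeBoundary.2 ⟨hv, .inl ⟨rfl, .inl rfl⟩, fun h => ?_⟩⟩
  exact (hmax _ h).not_gt (lt_add_one v.2)

/-! ### Flux of closed walks -/

section Flux

variable {V : Type*} {G : SimpleGraph V}

/-- The sum of `κ` over the oriented edges of a walk. -/
def walkSum (κ : V → V → ℤ) {u v : V} (p : G.Walk u v) : ℤ :=
  (p.darts.map fun e => κ e.fst e.snd).sum

variable {κ κ' : V → V → ℤ} {u v w : V}

theorem walkSum_cons (h : G.Adj u v) (p : G.Walk v w) :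
    walkSum κ (p.cons h) = κ u v + walkSum κ p := by
  simp [walkSum]

theorem walkSum_append (p : G.Walk u v) (q : G.Walk v w) :
    walkSum κ (p.append q) = walkSum κ p + walkSum κ q := by
  simp [walkSum]

theorem walkSum_sub (p : G.Walk u v) :
    walkSum (fun a b => κ a b - κ' a b) p = walkSum κ p - walkSum κ' p := by
  induction p with
  | nil => simp [walkSum]
  | cons h p ih => simp only [walkSum_cons, ih]; ring

theorem walkSum_eq_sub (χ : V → ℤ) (p : G.Walk u v)
    (h : ∀ a ∈ p.support, ∀ b ∈ p.support, G.Adj a b → κ a b = χ b - χ a) :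
    walkSum κ p = χ v - χ u := by
  induction p with
  | nil => simp [walkSum]
  | cons hadj p ih =>
    rw [walkSum_cons, ih fun a ha b hb => h a (List.mem_cons_of_mem _ ha) b
      (List.mem_cons_of_mem _ hb), h _ (by simp) _ (by simp) hadj]
    ring

end Flux

/-- The signed crossing number, with left to right counted positively, of the step from `u` to `v`
with the part at levels at least `n` of the line between columns `i` and `i + 1`. The level of an
edge between adjacent bricks `(i, j)` and `(i + 1, j')` is `j + j'`; it increases by one along the
line from one edge to the next. -/
def crossing (i n : ℤ) (u v : ℤ × ℤ) : ℤ :=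
  (if u.1 = i ∧ v.1 = i + 1 ∧ n ≤ u.2 + v.2 then 1 else 0) -
    if v.1 = i ∧ u.1 = i + 1 ∧ n ≤ u.2 + v.2 then 1 else 0

section Winding

variable {v : ℤ × ℤ} {γ : brickGraph.Walk v v}

theorem walkSum_crossing_eq {i n i' n' : ℤ} (χ : ℤ × ℤ → ℤ)
    (h : ∀ a ∈ γ.support, ∀ b ∈ γ.support, brickGraph.Adj a b →
      crossing i n a b - crossing i' n' a b = χ b - χ a) :
    walkSum (crossing i n) γ = walkSum (crossing i' n') γ := by
  have hsub := walkSum_eq_sub χ γ h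
  rw [walkSum_sub] at hsub
  lia

theorem walkSum_crossing_right_succ {i n : ℤ}
    (h : (i, (n + 1) / 2) ∉ γ.support ∨ (i + 1, n / 2) ∉ γ.support) :
    walkSum (crossing i n) γ = walkSum (crossing i (n + 1)) γ := by
  refine walkSum_crossing_eq 0 fun a ha b hb hab => ?_
  have hne (c d : ℤ × ℤ) (hc : c ∈ γ.support) (hd : d ∈ γ.support) :
      ¬(c = (i, (n + 1) / 2) ∧ d = (i + 1, n / 2)) := by
    rintro ⟨rfl, rfl⟩
    tauto
  have h1 := hne a b ha hb
  have h2 := hne b a hb ha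
  simp only [Prod.ext_iff, brickGraph_adj] at h1 h2 hab
  simp only [crossing, Pi.zero_apply]
  grind (splits := 20)

theorem walkSum_crossing_left {q : ℤ × ℤ} (hq : q ∉ γ.support) :
    walkSum (crossing (q.1 - 1) (2 * q.2 + 2)) γ = walkSum (crossing q.1 (2 * q.2 + 1)) γ := by
  refine walkSum_crossing_eq (fun c => if c.1 = q.1 ∧ q.2 + 1 ≤ c.2 then 1 else 0)
    fun a ha b hb hab => ?_
  have h1 : a ≠ q := by grind
  have h2 : b ≠ q := by grind
  simp only [ne_eq, Prod.ext_iff, brickGraph_adj] at h1 h2 hab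
  simp only [crossing]
  grind (splits := 20)

/-- The winding number of `γ` around a brick `q` off `γ`, as the flux of `γ` through the ray which
starts in `q` and follows the right side of the column of `q` upwards. -/
def winding (γ : brickGraph.Walk v v) (q : ℤ × ℤ) : ℤ :=
  walkSum (crossing q.1 (2 * q.2)) γ

variable {q : ℤ × ℤ}

theorem walkSum_crossing_right_eq_winding (hq : q ∉ γ.support) {n : ℤ} (hn : 2 * q.2 - 1 ≤ n)
    (hn' : n ≤ 2 * q.2 + 1) : walkSum (crossing q.1 n) γ = winding γ q := by
  have hsucc (m : ℤ) (hm : (m + 1) / 2 = q.2) :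
      walkSum (crossing q.1 m) γ = walkSum (crossing q.1 (m + 1)) γ :=
    walkSum_crossing_right_succ (.inl (by rwa [hm]))
  have hlow := hsucc (2 * q.2 - 1) (by lia)
  have hhigh := hsucc (2 * q.2) (by lia)
  obtain rfl | rfl | rfl : n = 2 * q.2 - 1 ∨ n = 2 * q.2 ∨ n = 2 * q.2 + 1 := by lia
  · rwa [sub_add_cancel] at hlow
  · rfl
  · exact hhigh.symm

theorem walkSum_crossing_left_eq_winding (hq : q ∉ γ.support) {n : ℤ} (hn : 2 * q.2 ≤ n)
    (hn' : n ≤ 2 * q.2 + 2) : walkSum (crossing (q.1 - 1) n) γ = winding γ q := by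
  have hsucc (m : ℤ) (hm : m / 2 = q.2) :
      walkSum (crossing (q.1 - 1) m) γ = walkSum (crossing (q.1 - 1) (m + 1)) γ :=
    walkSum_crossing_right_succ (.inr (by rwa [hm, sub_add_cancel]))
  have hlow := hsucc (2 * q.2) (by lia)
  have hhigh := hsucc (2 * q.2 + 1) (by lia)
  have htop : walkSum (crossing (q.1 - 1) (2 * q.2 + 1 + 1)) γ = winding γ q := by
    rw [add_assoc]
    exact (walkSum_crossing_left hq).trans
      (walkSum_crossing_right_eq_winding hq (by lia) (by lia))
  obtain rfl | rfl | rfl : n = 2 * q.2 ∨ n = 2 * q.2 + 1 ∨ n = 2 * q.2 + 1 + 1 := by lia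
  · exact hlow.trans (hhigh.trans htop)
  · exact hhigh.trans htop
  · exact htop

theorem winding_eq_of_adj {q' : ℤ × ℤ} (hq : q ∉ γ.support) (hq' : q' ∉ γ.support)
    (hadj : brickGraph.Adj q q') : winding γ q = winding γ q' := by
  wlog hle : q.1 ≤ q'.1 generalizing q q'
  · exact (this hq' hq hadj.symm (le_of_not_ge hle)).symm
  obtain ⟨hcol, hrow⟩ | ⟨hcol, hrow⟩ :
      q.1 = q'.1 ∧ (q'.2 = q.2 + 1 ∨ q.2 = q'.2 + 1) ∨
        q'.1 = q.1 + 1 ∧ (q'.2 = q.2 ∨ q'.2 = q.2 - 1) := by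
    rw [brickGraph_adj] at hadj
    lia
  · rw [← walkSum_crossing_right_eq_winding hq (n := q.2 + q'.2) (by lia) (by lia), hcol,
      walkSum_crossing_right_eq_winding hq' (by lia) (by lia)]
  · rw [← walkSum_crossing_right_eq_winding hq (n := q.2 + q'.2) (by lia) (by lia),
      eq_sub_of_add_eq hcol.symm, walkSum_crossing_left_eq_winding hq' (by lia) (by lia)]

theorem abs_le_of_winding_ne_zero {N : ℤ} (hN : ∀ u ∈ γ.support, |u.1| ≤ N ∧ |u.2| ≤ N)
    (hq : winding γ q ≠ 0) : |q.1| ≤ N ∧ |q.2| ≤ N := by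
  contrapose! hq
  by_cases hlow : q.2 < -N
  · refine (walkSum_eq_sub (fun c => if q.1 + 1 ≤ c.1 then 1 else 0) γ
      fun a ha b hb hab => ?_).trans (sub_self _)
    have haN := hN a ha
    have hbN := hN b hb
    simp only [abs_le, brickGraph_adj] at haN hbN hab
    simp only [crossing]
    grind (splits := 20)
  · refine (walkSum_eq_sub 0 γ fun a ha b hb _ => ?_).trans (sub_self _)
    have haN := hN a ha
    have hbN := hN b hb
    simp only [abs_le] at haN hbN hq
    simp only [crossing, Pi.zero_apply]
    grind (splits := 20)

theorem winding_eq_zero {H : Set (ℤ × ℤ)} (hH : HasNoHoles brickGraph H)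
    (hγ : ∀ u ∈ γ.support, u ∈ H) (hq : q ∉ H) : winding γ q = 0 := by
  by_contra hne
  obtain ⟨N, hN⟩ : ∃ N : ℤ, ∀ u ∈ γ.support, |u.1| ≤ N ∧ |u.2| ≤ N := by
    obtain ⟨N, hN⟩ := (γ.support.toFinset.image fun u => max |u.1| |u.2|).bddAbove
    refine ⟨N, fun u hu => max_le_iff.1 (hN ?_)⟩
    exact Finset.mem_coe.2 (Finset.mem_image_of_mem _ (List.mem_toFinset.2 hu))
  have hfin : {r | winding γ r ≠ 0 ∧ r ∉ H}.Finite := by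
    refine ((Set.finite_Icc (-N) N).prod (Set.finite_Icc (-N) N)).subset fun r hr => ?_
    have hrN := abs_le_of_winding_ne_zero hN hr.1
    exact ⟨abs_le.1 hrN.1, abs_le.1 hrN.2⟩
  obtain ⟨a, ha, b, hb, hbH, hab⟩ := hH hfin.toFinset ⟨q, by simp [hne, hq]⟩
    (Set.disjoint_left.2 fun r hr => (hfin.mem_toFinset.1 hr).2)
  simp only [Set.Finite.mem_toFinset, Set.mem_ofPred_eq, not_and_not_right] at ha hb
  refine hbH (hb ?_)
  rw [← winding_eq_of_adj (fun h => ha.2 (hγ _ h)) (fun h => hbH (hγ _ h)) hab]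
  exact ha.1

/-- Level `n` of the line between columns `i` and `i + 1` is interior to `H`: the two bricks which
share the edge at this level both lie in `H`. -/
def IsInnerLevel (H : Set (ℤ × ℤ)) (i n : ℤ) : Prop :=
  (i, (n + 1) / 2) ∈ H ∧ (i + 1, n / 2) ∈ H

theorem walkSum_crossing_eq_zero {H : Set (ℤ × ℤ)} (hH : HasNoHoles brickGraph H)
    (hγ : ∀ u ∈ γ.support, u ∈ H) {i n : ℤ} (hin : ¬IsInnerLevel H i n) :
    walkSum (crossing i n) γ = 0 ∧ walkSum (crossing i (n + 1)) γ = 0 := by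
  have hcases : (i, (n + 1) / 2) ∉ H ∨ (i + 1, n / 2) ∉ H := not_and_or.1 hin
  have hsucc : walkSum (crossing i n) γ = walkSum (crossing i (n + 1)) γ :=
    walkSum_crossing_right_succ (hcases.imp (mt (hγ _)) (mt (hγ _)))
  suffices h : walkSum (crossing i n) γ = 0 from ⟨h, hsucc ▸ h⟩
  obtain h | h := hcases
  · rw [← winding_eq_zero hH hγ h,
      ← walkSum_crossing_right_eq_winding (mt (hγ _) h) (n := n) (by lia) (by lia)]
  · rw [← winding_eq_zero hH hγ h,
      ← walkSum_crossing_left_eq_winding (mt (hγ _) h) (n := n) (by lia) (by lia)]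
    simp only [add_sub_cancel_right]

end Winding

/-! ### Contacts of connected unions of columns -/

/-- `P` is a union of columns of `H`, a column being a maximal set of consecutive bricks of `H`
with the same first coordinate. -/
def IsUnionOfColumns (H P : Set (ℤ × ℤ)) : Prop :=
  P ⊆ H ∧ ∀ u ∈ P, ∀ v ∈ H, brickGraph.Adj u v → u.1 = v.1 → v ∈ P

section Contact

variable {H P Q : Set (ℤ × ℤ)} {i c d n : ℤ}

theorem IsUnionOfColumns.mem_of_isInnerLevel (hP : IsUnionOfColumns H P)
    (hQ : IsUnionOfColumns H Q) (hcd : ∀ m ∈ Set.Icc c d, IsInnerLevel H i m)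
    (hn : n ∈ Set.Icc c d) (hnP : (i, (n + 1) / 2) ∈ P) (hnQ : (i + 1, n / 2) ∈ Q) :
    ∀ m ∈ Set.Icc c d, (i, (m + 1) / 2) ∈ P ∧ (i + 1, m / 2) ∈ Q := by
  have hcolumn {S : Set (ℤ × ℤ)} (hS : IsUnionOfColumns H S) {k a b : ℤ} (ha : (k, a) ∈ S)
      (hb : (k, b) ∈ H) (hab : b = a ∨ b = a + 1 ∨ a = b + 1) : (k, b) ∈ S := by
    obtain rfl | hab := hab
    exacts [ha, hS.2 _ ha _ hb (.inl ⟨rfl, hab⟩) rfl]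
  have hstep (m m' : ℤ) (hm' : m' ∈ Set.Icc c d) (hmm' : m' = m + 1 ∨ m = m' + 1)
      (hm : (i, (m + 1) / 2) ∈ P ∧ (i + 1, m / 2) ∈ Q) :
      (i, (m' + 1) / 2) ∈ P ∧ (i + 1, m' / 2) ∈ Q :=
    ⟨hcolumn hP hm.1 (hcd m' hm').1 (by lia), hcolumn hQ hm.2 (hcd m' hm').2 (by lia)⟩
  rintro m ⟨hcm, hmd⟩
  obtain hnm | hmn := le_total n m
  · induction m, hnm using Int.leInduction with
    | base => exact ⟨hnP, hnQ⟩
    | succ m hnm ih =>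
      exact hstep m _ ⟨hcm, hmd⟩ (.inl rfl) (ih (hn.1.trans hnm) (by lia))
  · induction m, hmn using Int.leInductionDown with
    | base => exact ⟨hnP, hnQ⟩
    | pred m hmn ih =>
      exact hstep m _ ⟨hcm, hmd⟩ (.inr (by lia)) (ih (by lia) (hmn.trans hn.2))

/-- The signed crossing number of the step from `u` to `v` with the levels `c, …, d` of the line
between columns `i` and `i + 1`. -/
def crossingIcc (i c d : ℤ) (u v : ℤ × ℤ) : ℤ :=
  crossing i c u v - crossing i (d + 1) u v

theorem walkSum_crossingIcc_eq_zero (hcd : c ≤ d) {S : Set (ℤ × ℤ)} {u v : ℤ × ℤ}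
    (w : brickGraph.Walk u v) (hw : ∀ x ∈ w.support, x ∈ S)
    (hS : ∀ m ∈ Set.Icc c d, ¬IsInnerLevel S i m) :
    walkSum (crossingIcc i c d) w = 0 := by
  refine (walkSum_eq_sub 0 w fun a ha b hb hab => ?_).trans (sub_self _)
  have hcross {x y : ℤ × ℤ} (hxS : x ∈ S) (hyS : y ∈ S) (hxy : brickGraph.Adj x y) :
      ¬(x.1 = i ∧ y.1 = i + 1 ∧ x.2 + y.2 ∈ Set.Icc c d) := by
    rintro ⟨hx, hy, hlevel⟩
    rw [brickGraph_adj] at hxy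
    have hx' : (i, (x.2 + y.2 + 1) / 2) = x := Prod.ext hx.symm (by lia)
    have hy' : (i + 1, (x.2 + y.2) / 2) = y := Prod.ext hy.symm (by lia)
    exact hS _ hlevel (by rw [IsInnerLevel, hx', hy']; exact ⟨hxS, hyS⟩)
  have hforth := hcross (hw a ha) (hw b hb) hab
  have hback := hcross (hw b hb) (hw a ha) hab.symm
  simp only [Set.mem_Icc] at hforth hback
  simp only [crossingIcc, crossing, Pi.zero_apply]
  grind (splits := 20)

/-- Otherwise a closed walk through `P` and `Q` which uses both contacts would cross the boundary
segment with levels `c, …, d` exactly once, and wind around a brick outside `H`. -/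
theorem mem_Icc_of_adj_of_hasNoHoles (hH : HasNoHoles brickGraph H)
    (hP : WalkConnected brickGraph P) (hQ : WalkConnected brickGraph Q) (hPH : P ⊆ H)
    (hQH : Q ⊆ H) (hPQ : Disjoint P Q) (hc : ¬IsInnerLevel H i (c - 1))
    (hd : ¬IsInnerLevel H i (d + 1))
    (hcd : ∀ m ∈ Set.Icc c d, (i, (m + 1) / 2) ∈ P ∧ (i + 1, m / 2) ∈ Q)
    (hn : n ∈ Set.Icc c d) {p q : ℤ × ℤ} (hp : p ∈ P) (hq : q ∈ Q) (hpq : brickGraph.Adj p q) :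
    p.1 = i ∧ q.1 = i + 1 ∧ p.2 + q.2 ∈ Set.Icc c d := by
  rw [Set.disjoint_left] at hPQ
  obtain ⟨hnP, hnQ⟩ := hcd n hn
  obtain ⟨wQ, hwQ⟩ := hQ _ hnQ _ hq
  obtain ⟨wP, hwP⟩ := hP _ hp _ hnP
  have hadj : brickGraph.Adj (i, (n + 1) / 2) (i + 1, n / 2) := by
    simp only [brickGraph_adj]
    lia
  let γ := (wQ.append (wP.cons hpq.symm)).cons hadj
  have hγ : ∀ u ∈ γ.support, u ∈ H := by
    simp only [γ, SimpleGraph.Walk.support_cons, SimpleGraph.Walk.mem_support_append_iff,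
      List.mem_cons]
    rintro u (rfl | hu | rfl | hu)
    exacts [hPH hnP, hQH (hwQ u hu), hQH hq, hPH (hwP u hu)]
  have hflux : walkSum (crossingIcc i c d) γ = 0 := by
    have hlow := (walkSum_crossing_eq_zero hH hγ hc).2
    rw [sub_add_cancel] at hlow
    exact (walkSum_sub γ).trans (by rw [hlow, (walkSum_crossing_eq_zero hH hγ hd).1, sub_zero])
  have hforth : crossingIcc i c d (i, (n + 1) / 2) (i + 1, n / 2) = 1 := by
    simp only [Set.mem_Icc] at hn
    simp only [crossingIcc, crossing]
    grind
  have hfluxP := walkSum_crossingIcc_eq_zero (hn.1.trans hn.2) wP hwP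
    fun m hm h => hPQ h.2 (hcd m hm).2
  have hfluxQ := walkSum_crossingIcc_eq_zero (hn.1.trans hn.2) wQ hwQ
    fun m hm h => hPQ (hcd m hm).1 h.1
  have hback : crossingIcc i c d q p = -1 := by
    rw [walkSum_cons, walkSum_append, walkSum_cons, hforth, hfluxP, hfluxQ] at hflux
    lia
  simp only [crossingIcc, crossing] at hback
  simp only [Set.mem_Icc]
  grind (splits := 20)

end Contact

/-! ### Gluing rectangles to plane sets -/

section Gluing

theorem nonempty_homeomorph_image {E F : Type*} [TopologicalSpace E] [TopologicalSpace F]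
    [T2Space F] {K : Set E} (hK : IsCompact K) {g : E → F} (hg : ContinuousOn g K)
    (hinj : K.InjOn g) : Nonempty (K ≃ₜ g '' K) :=
  have : CompactSpace K := isCompact_iff_compactSpace.1 hK
  ⟨(hg.mapsToRestrict (Set.mapsTo_image g K)).homeoOfEquivCompactToT2
    (f := hinj.bijOn_image.equiv g)⟩

theorem nonempty_homeomorph_union {E : Type*} [TopologicalSpace E] [T2Space E] {K W : Set E}
    (hK : IsCompact K) (Φ : E ≃ₜ E) (hΦ : Φ '' W = K ∩ W)
    (hfix : ∀ z ∈ K ∩ frontier W, Φ z = z) : Nonempty (↥(K ∪ W) ≃ₜ K) := by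
  classical
  have himage : W.piecewise Φ.symm id '' K = K ∪ W := by
    have hsplit : K = K ∩ W ∪ K \ W := (Set.inter_union_sdiff K W).symm
    rw [hsplit, Set.image_union, ← hsplit,
      Set.EqOn.image_eq ((Set.piecewise_eqOn W Φ.symm id).mono Set.inter_subset_right), ← hΦ,
      Function.LeftInverse.image_image Φ.symm_apply_apply, Set.EqOn.image_eq
        ((Set.piecewise_eqOn_compl W Φ.symm id).mono fun z hz => hz.2), Set.image_id,
      Set.union_sdiff_self, Set.union_comm]
  have hcont : ContinuousOn (W.piecewise Φ.symm id) K :=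
    ContinuousOn.piecewise (fun z hz => (Φ.symm_apply_eq.2 (hfix z hz).symm))
      Φ.symm.continuous.continuousOn continuousOn_id
  have hinj : K.InjOn (W.piecewise Φ.symm id) := by
    have hmem {z : E} (hzK : z ∈ K) (hzW : z ∈ W) : Φ.symm z ∈ W := by
      obtain ⟨w, hw, rfl⟩ := hΦ.ge ⟨hzK, hzW⟩
      rwa [Φ.symm_apply_apply]
    intro z hz w hw hzw
    by_cases hzW : z ∈ W <;> by_cases hwW : w ∈ W <;>
      simp only [hzW, hwW, not_false_eq_true, Set.piecewise_eq_of_mem,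
        Set.piecewise_eq_of_notMem, id_eq] at hzw
    · exact Φ.symm.injective hzw
    · exact absurd (hzw ▸ hmem hz hzW) hwW
    · exact absurd (hzw ▸ hmem hw hwW) hzW
    · exact hzw
  exact himage ▸ (nonempty_homeomorph_image hK hcont hinj).map Homeomorph.symm

theorem exists_homeomorph_image_eq_of_gauge {E : Type*} [NormedAddCommGroup E] [NormedSpace ℝ E]
    {s t : Set E} (hs : Convex ℝ s) (hs₀ : s ∈ nhds 0) (hsb : Bornology.IsBounded s)
    (hsc : IsClosed s) (ht : Convex ℝ t) (ht₀ : t ∈ nhds 0) (htb : Bornology.IsBounded t)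
    (htc : IsClosed t) : ∃ Φ : E ≃ₜ E, Φ '' s = t ∧ (∀ z, ∃ r : ℝ, 0 < r ∧ Φ z = r • z) ∧
      ∀ z, gauge s z = gauge t z → Φ z = z := by
  have hsv := (NormedSpace.isVonNBounded_iff ℝ).2 hsb
  have htv := (NormedSpace.isVonNBounded_iff ℝ).2 htb
  let Φ := gaugeRescaleHomeomorph s t hs hs₀ hsv ht ht₀ htv
  have hΦ (z : E) : Φ z = (gauge s z / gauge t z) • z := rfl
  have hspos {z : E} (hz : z ≠ 0) : 0 < gauge s z :=
    (gauge_pos (absorbent_nhds_zero hs₀) hsv).2 hz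
  have htpos {z : E} (hz : z ≠ 0) : 0 < gauge t z :=
    (gauge_pos (absorbent_nhds_zero ht₀) htv).2 hz
  refine ⟨Φ, ?_, fun z => ?_, fun z hz => ?_⟩
  · simpa only [hsc.closure_eq, htc.closure_eq] using
      image_gaugeRescaleHomeomorph_closure hs hs₀ hsv ht ht₀ htv
  · obtain rfl | hz := eq_or_ne z 0
    · exact ⟨1, one_pos, by simp [hΦ]⟩
    · exact ⟨_, div_pos (hspos hz) (htpos hz), hΦ z⟩
  · obtain rfl | hz₀ := eq_or_ne z 0
    · simp [hΦ]
    · rw [hΦ, hz, div_self (htpos hz₀).ne', one_smul]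

theorem gauge_Icc_prod_Icc {l : ℝ} (hl : 1 ≤ l) {z : ℝ × ℝ} (hz : |z.1| ≤ |z.2|) :
    gauge (Set.Icc (-l) l ×ˢ Set.Icc (-1 : ℝ) 1) z = gauge (Set.Icc (-1 : ℝ) 1) z.2 := by
  simp only [gauge_def']
  congr 1
  ext r
  simp only [Set.mem_ofPred_eq, Set.mem_prod, Set.mem_Icc, ← abs_le, Prod.smul_fst,
    Prod.smul_snd, smul_eq_mul, abs_mul]
  exact and_congr_right fun _ => ⟨And.right, fun h =>
    ⟨((mul_le_mul_of_nonneg_left hz (abs_nonneg _)).trans h).trans hl, h⟩⟩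

theorem exists_homeomorph_image_Icc_prod {L : ℝ} (hL : 1 ≤ L) : ∃ Φ : ℝ × ℝ ≃ₜ ℝ × ℝ,
    Φ '' (Set.Icc 0 L ×ˢ Set.Icc (-1) 1) = Set.Icc 0 1 ×ˢ Set.Icc (-1) 1 ∧
      ∀ z, |z.1| ≤ |z.2| → Φ z = z := by
  let box (l : ℝ) : Set (ℝ × ℝ) := Set.Icc (-l) l ×ˢ Set.Icc (-1) 1
  have hconvex (l : ℝ) : Convex ℝ (box l) := (convex_Icc _ _).prod (convex_Icc _ _)
  have hnhds {l : ℝ} (hl : 1 ≤ l) : box l ∈ nhds 0 :=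
    prod_mem_nhds (Icc_mem_nhds (neg_lt_zero.2 (by linarith)) (zero_lt_one.trans_le hl))
      (Icc_mem_nhds (neg_lt_zero.2 one_pos) one_pos)
  have hbdd (l : ℝ) : Bornology.IsBounded (box l) := (isCompact_Icc.prod isCompact_Icc).isBounded
  have hclosed (l : ℝ) : IsClosed (box l) := isClosed_Icc.prod isClosed_Icc
  obtain ⟨Φ, himage, hpos, hfix⟩ := exists_homeomorph_image_eq_of_gauge (hconvex L) (hnhds hL)
    (hbdd L) (hclosed L) (hconvex 1) (hnhds le_rfl) (hbdd 1) (hclosed 1)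
  have hhalf : Φ ⁻¹' {z | 0 ≤ z.1} = {z | 0 ≤ z.1} := by
    ext z
    obtain ⟨r, hr, hz⟩ := hpos z
    simp [hz, mul_nonneg_iff_of_pos_left hr]
  have hbox {l : ℝ} (hl : 1 ≤ l) :
      box l ∩ {z | 0 ≤ z.1} = Set.Icc 0 l ×ˢ Set.Icc (-1) 1 := by
    ext z
    simp only [box, Set.mem_inter_iff, Set.mem_prod, Set.mem_Icc, Set.mem_ofPred_eq]
    grind
  refine ⟨Φ, ?_, fun z hz => hfix z ?_⟩
  · rw [← hbox hL, ← hbox le_rfl, Set.image_inter Φ.injective, himage]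
    exact congrArg _ ((congrArg _ hhalf.symm).trans (Set.image_preimage_eq _ Φ.surjective))
  · rw [gauge_Icc_prod_Icc hL hz, gauge_Icc_prod_Icc le_rfl hz]

theorem nonempty_homeomorph_union_Icc_prod {K : Set (ℝ × ℝ)} (hK : IsCompact K) {L : ℝ}
    (hL : 1 ≤ L) (hcollar : Set.Icc 0 1 ×ˢ Set.Icc (-1) 1 ⊆ K)
    (hmeet : K ∩ Set.Icc 1 L ×ˢ Set.Icc (-1) 1 ⊆ {z | z.1 = 1}) :
    Nonempty (↥(K ∪ Set.Icc 1 L ×ˢ Set.Icc (-1) 1) ≃ₜ K) := by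
  obtain rfl | hL := hL.eq_or_lt
  · rw [Set.union_eq_self_of_subset_right (subset_trans
      (Set.prod_mono_left (Set.Icc_subset_Icc_left zero_le_one)) hcollar)]
    exact ⟨Homeomorph.refl K⟩
  obtain ⟨Φ, himage, hfix⟩ := exists_homeomorph_image_Icc_prod hL.le
  have hle {z : ℝ × ℝ} (hzK : z ∈ K) (hz : z ∈ Set.Icc 0 L ×ˢ Set.Icc (-1) 1) : z.1 ≤ 1 :=
    (le_total z.1 1).elim id fun h => (hmeet ⟨hzK, ⟨h, hz.1.2⟩, hz.2⟩).le
  have hinter : K ∩ Set.Icc 0 L ×ˢ Set.Icc (-1) 1 = Set.Icc 0 1 ×ˢ Set.Icc (-1) 1 :=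
    Set.Subset.antisymm (fun z hz => ⟨⟨hz.2.1.1, hle hz.1 hz.2⟩, hz.2.2⟩) fun z hz =>
      ⟨hcollar hz, ⟨hz.1.1, hz.1.2.trans hL.le⟩, hz.2⟩
  have hunion : K ∪ Set.Icc 0 L ×ˢ Set.Icc (-1) 1 = K ∪ Set.Icc 1 L ×ˢ Set.Icc (-1) 1 := by
    rw [← Set.Icc_union_Icc_eq_Icc zero_le_one hL.le, Set.union_prod, ← Set.union_assoc,
      Set.union_eq_self_of_subset_right hcollar]
  refine hunion ▸ nonempty_homeomorph_union hK Φ (himage.trans hinter.symm) fun z hz => ?_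
  have hzW := (isClosed_Icc.prod isClosed_Icc).frontier_subset hz.2
  have hz1 := hle hz.1 hzW
  have hz₂ := hz.2
  rw [frontier_prod_eq, frontier_Icc (by norm_num),
    frontier_Icc (zero_le_one.trans hL.le)] at hz₂
  refine hfix z ?_
  rw [abs_of_nonneg hzW.1.1]
  simp only [Set.mem_union, Set.mem_prod, Set.mem_insert_iff, Set.mem_singleton_iff] at hz₂
  obtain ⟨-, h | h⟩ | ⟨h | h, -⟩ := hz₂
  · simpa [h] using hz1
  · simpa [h] using hz1
  · simp [h]
  · exact absurd (h ▸ hz1 : L ≤ 1) hL.not_ge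

theorem affineHomeomorph_image_uIcc {a : ℝ} (ha : a ≠ 0) (b x y : ℝ) :
    affineHomeomorph a b ha '' Set.uIcc x y = Set.uIcc (a * x + b) (a * y + b) := by
  change (fun t => a * t + b) '' _ = _
  rw [← Set.image_image (· + b) (a * ·), Set.image_const_mul_uIcc, Set.image_add_const_uIcc]

theorem nonempty_homeomorph_union_uIcc_prod {K : Set (ℝ × ℝ)} (hK : IsCompact K)
    {u v w c d : ℝ} (huv : u ≠ v) (hcd : c ≠ d) (hw : 1 ≤ (w - u) / (v - u))
    (hcollar : Set.uIcc u v ×ˢ Set.uIcc c d ⊆ K)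
    (hmeet : K ∩ Set.uIcc v w ×ˢ Set.uIcc c d ⊆ {z | z.1 = v}) :
    Nonempty (↥(K ∪ Set.uIcc v w ×ˢ Set.uIcc c d) ≃ₜ K) := by
  have hvu : v - u ≠ 0 := sub_ne_zero.2 huv.symm
  have hdc : (d - c) / 2 ≠ 0 := div_ne_zero (sub_ne_zero.2 hcd.symm) two_ne_zero
  let Ψ := (affineHomeomorph (v - u) u hvu).prodCongr
    (affineHomeomorph ((d - c) / 2) ((c + d) / 2) hdc)
  have hrect {x y : ℝ} (hxy : x ≤ y) : Ψ ⁻¹' (Set.uIcc ((v - u) * x + u) ((v - u) * y + u) ×ˢ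
      Set.uIcc c d) = Set.Icc x y ×ˢ Set.Icc (-1) 1 := by
    rw [← Set.preimage_image_eq (Set.Icc x y ×ˢ Set.Icc (-1) 1) Ψ.injective, ← Set.uIcc_of_le hxy,
      ← Set.uIcc_of_le (by norm_num : (-1 : ℝ) ≤ 1), Homeomorph.coe_prodCongr,
      Set.prodMap_image_prod, affineHomeomorph_image_uIcc, affineHomeomorph_image_uIcc]
    ring_nf
  have hcollar' := hrect zero_le_one
  have hblock := hrect hw
  rw [mul_zero, zero_add, mul_one, sub_add_cancel] at hcollar'
  rw [mul_one, mul_div_cancel₀ _ hvu, sub_add_cancel, sub_add_cancel] at hblock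
  have hK' : IsCompact (Ψ ⁻¹' K) := Ψ.isCompact_preimage.2 hK
  obtain ⟨e⟩ := nonempty_homeomorph_union_Icc_prod hK' hw (hcollar' ▸ Set.preimage_mono hcollar)
    (by
      rw [← hblock, ← Set.preimage_inter]
      intro z hz
      exact mul_left_cancel₀ hvu (by linarith [show (v - u) * z.1 + u = v from hmeet hz]))
  rw [← hblock, ← Set.preimage_union] at e
  exact ⟨((Ψ.sets rfl).symm.trans e).trans (Ψ.sets rfl)⟩

theorem nonempty_homeomorph_union_prod_uIcc {K : Set (ℝ × ℝ)} (hK : IsCompact K)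
    {a b u v w : ℝ} (hab : a ≠ b) (huv : u ≠ v) (hw : 1 ≤ (w - u) / (v - u))
    (hcollar : Set.uIcc a b ×ˢ Set.uIcc u v ⊆ K)
    (hmeet : K ∩ Set.uIcc a b ×ˢ Set.uIcc v w ⊆ {z | z.2 = v}) :
    Nonempty (↥(K ∪ Set.uIcc a b ×ˢ Set.uIcc v w) ≃ₜ K) := by
  let σ := Homeomorph.prodComm ℝ ℝ
  have hrect (s t : Set ℝ) : s ×ˢ t = σ ⁻¹' (t ×ˢ s) := Set.ext fun _ => and_comm
  obtain ⟨e⟩ := nonempty_homeomorph_union_uIcc_prod (σ.isCompact_preimage.2 hK) huv hab hw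
    (hrect _ _ ▸ Set.preimage_mono hcollar)
    (by rw [hrect, ← Set.preimage_inter]; exact Set.preimage_mono hmeet)
  rw [hrect, ← Set.preimage_union] at e
  exact ⟨((σ.sets rfl).symm.trans e).trans (σ.sets rfl)⟩

theorem nonempty_homeomorph_union_prod_Icc_right {K : Set (ℝ × ℝ)} (hK : IsCompact K)
    {a b s₀ s₁ r₁ : ℝ} (hab : a ≠ b) (hs : s₀ < s₁) (hr : s₁ ≤ r₁)
    (hcollar : Set.uIcc a b ×ˢ Set.Icc s₀ s₁ ⊆ K)
    (hmeet : K ∩ Set.uIcc a b ×ˢ Set.Icc s₁ r₁ ⊆ {z | z.2 = s₁}) :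
    Nonempty (↥(K ∪ Set.uIcc a b ×ˢ Set.Icc s₀ r₁) ≃ₜ K) := by
  rw [← Set.Icc_union_Icc_eq_Icc hs.le hr, Set.prod_union, ← Set.union_assoc,
    Set.union_eq_self_of_subset_right hcollar]
  rw [← Set.uIcc_of_le hr] at hmeet ⊢
  rw [← Set.uIcc_of_le hs.le] at hcollar
  exact nonempty_homeomorph_union_prod_uIcc hK hab hs.ne
    ((one_le_div (sub_pos.2 hs)).2 (by linarith)) hcollar hmeet

theorem nonempty_homeomorph_union_prod_Icc_left {K : Set (ℝ × ℝ)} (hK : IsCompact K)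
    {a b r₀ s₀ s₁ : ℝ} (hab : a ≠ b) (hs : s₀ < s₁) (hr : r₀ ≤ s₀)
    (hcollar : Set.uIcc a b ×ˢ Set.Icc s₀ s₁ ⊆ K)
    (hmeet : K ∩ Set.uIcc a b ×ˢ Set.Icc r₀ s₀ ⊆ {z | z.2 = s₀}) :
    Nonempty (↥(K ∪ Set.uIcc a b ×ˢ Set.Icc r₀ s₁) ≃ₜ K) := by
  rw [← Set.Icc_union_Icc_eq_Icc hr hs.le, Set.union_comm (Set.Icc r₀ s₀), Set.prod_union,
    ← Set.union_assoc, Set.union_eq_self_of_subset_right hcollar]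
  rw [← Set.uIcc_of_ge hr] at hmeet ⊢
  rw [← Set.uIcc_of_ge hs.le] at hcollar
  exact nonempty_homeomorph_union_prod_uIcc hK hab hs.ne'
    ((one_le_div_of_neg (sub_neg.2 hs)).2 (by linarith)) hcollar hmeet

theorem nonempty_homeomorph_union_uIcc_prod_Icc {K : Set (ℝ × ℝ)} (hK : IsCompact K)
    {u v s₀ s₁ r₀ r₁ : ℝ} (huv : u ≠ v) (hs : s₀ < s₁) (hr₀ : r₀ ≤ s₀) (hr₁ : s₁ ≤ r₁)
    (hcollar : Set.uIcc u v ×ˢ Set.Icc s₀ s₁ ⊆ K)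
    (hmeet : K ∩ Set.uIcc v (2 * v - u) ×ˢ Set.Icc r₀ r₁ ⊆ {v} ×ˢ Set.Icc s₀ s₁) :
    Nonempty (↥(K ∪ Set.uIcc v (2 * v - u) ×ˢ Set.Icc r₀ r₁) ≃ₜ K) := by
  set J := Set.uIcc v (2 * v - u)
  have hvw : v ≠ 2 * v - u := fun h => huv (by linarith)
  have hmem {z : ℝ × ℝ} (hz : z ∈ K) (hJ : z.1 ∈ J) (h₀ : r₀ ≤ z.2) (h₁ : z.2 ≤ r₁) :
      z.1 = v ∧ s₀ ≤ z.2 ∧ z.2 ≤ s₁ := hmeet ⟨hz, hJ, h₀, h₁⟩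
  have hmid : Nonempty (↥(K ∪ J ×ˢ Set.Icc s₀ s₁) ≃ₜ K) := by
    rw [← Set.uIcc_of_le hs.le] at hcollar ⊢
    refine nonempty_homeomorph_union_uIcc_prod hK huv hs.ne ?_ hcollar fun z hz => ?_
    · rw [show 2 * v - u - u = 2 * (v - u) by ring,
        mul_div_cancel_right₀ _ (sub_ne_zero.2 huv.symm)]
      exact one_le_two
    · rw [Set.uIcc_of_le hs.le] at hz
      exact (hmem hz.1 hz.2.1 (hr₀.trans hz.2.2.1) (hz.2.2.2.trans hr₁)).1
  have hK₁ : IsCompact (K ∪ J ×ˢ Set.Icc s₀ s₁) := hK.union (isCompact_uIcc.prod isCompact_Icc)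
  have hright : Nonempty (↥(K ∪ J ×ˢ Set.Icc s₀ r₁) ≃ₜ ↥(K ∪ J ×ˢ Set.Icc s₀ s₁)) := by
    have h := nonempty_homeomorph_union_prod_Icc_right hK₁ hvw hs hr₁ Set.subset_union_right
      fun z ⟨hz, hzJ, h₀, h₁⟩ => (hz.elim (fun hz => (hmem hz hzJ (by linarith) h₁).2.2)
        fun hz => hz.2.2).antisymm h₀
    rwa [Set.union_assoc, Set.union_eq_self_of_subset_left
      (Set.prod_mono_right (Set.Icc_subset_Icc_right hr₁))] at h
  have hK₂ : IsCompact (K ∪ J ×ˢ Set.Icc s₀ r₁) := hK.union (isCompact_uIcc.prod isCompact_Icc)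
  have hleft : Nonempty (↥(K ∪ J ×ˢ Set.Icc r₀ r₁) ≃ₜ ↥(K ∪ J ×ˢ Set.Icc s₀ r₁)) := by
    have h := nonempty_homeomorph_union_prod_Icc_left hK₂ hvw (hs.trans_le hr₁) hr₀
      Set.subset_union_right fun z ⟨hz, hzJ, h₀, h₁⟩ => h₁.antisymm
        (hz.elim (fun hz => (hmem hz hzJ h₀ (by linarith)).2.1) fun hz => hz.2.1)
    rwa [Set.union_assoc, Set.union_eq_self_of_subset_left
      (Set.prod_mono_right (Set.Icc_subset_Icc_left hr₀))] at h
  exact ⟨(hleft.some.trans hright.some).trans hmid.some⟩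

theorem nonempty_homeomorph_closedBall_of_convex {E F : Type*} [NormedAddCommGroup E]
    [NormedSpace ℝ E] [NormedAddCommGroup F] [NormedSpace ℝ F] (e : E ≃L[ℝ] F) {s : Set E}
    (hs : Convex ℝ s) (hsb : Bornology.IsBounded s) (hsc : IsClosed s)
    (hsi : (interior s).Nonempty) : Nonempty (s ≃ₜ Metric.closedBall (0 : F) 1) := by
  have hball : (interior (e ⁻¹' Metric.closedBall 0 1)).Nonempty :=
    ⟨0, mem_interior_iff_mem_nhds.2 (e.continuous.continuousAt.preimage_mem_nhds
      (by simpa using Metric.closedBall_mem_nhds (0 : F) one_pos))⟩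
  have hballb : Bornology.IsBounded (e ⁻¹' Metric.closedBall 0 1) := by
    rw [← e.image_symm_eq_preimage]
    exact e.symm.lipschitz.isBounded_image Metric.isBounded_closedBall
  have hballc : Convex ℝ (e ⁻¹' Metric.closedBall 0 1) :=
    (convex_closedBall (0 : F) 1).linear_preimage e.toLinearMap
  obtain ⟨φ, -, hφ, -⟩ := exists_homeomorph_image_eq hs hsi
    ((NormedSpace.isVonNBounded_iff ℝ).2 hsb) hballc hball
    ((NormedSpace.isVonNBounded_iff ℝ).2 hballb)
  rw [hsc.closure_eq, (Metric.isClosed_closedBall.preimage e.continuous).closure_eq] at hφ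
  exact ⟨((φ.image s).trans (.setCongr hφ)).trans (e.toHomeomorph.sets rfl)⟩

end Gluing

/-! ### Regions made of bricks -/

/-- The brick `u` of the wall whose bricks have width `1` and height `2`. -/
def brick (u : ℤ × ℤ) : Set (ℝ × ℝ) :=
  Set.Icc (u.1 : ℝ) (u.1 + 1) ×ˢ Set.Icc (2 * u.2 + u.1 : ℝ) (2 * u.2 + u.1 + 2)

/-- The union of the bricks in `S`. -/
def brickRegion (S : Set (ℤ × ℤ)) : Set (ℝ × ℝ) := ⋃ u ∈ S, brick u

section Bricks

variable {H S T : Set (ℤ × ℤ)} {u v : ℤ × ℤ}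

theorem mem_brick {z : ℝ × ℝ} : z ∈ brick u ↔ (u.1 ≤ z.1 ∧ z.1 ≤ u.1 + 1) ∧
    2 * u.2 + u.1 ≤ z.2 ∧ z.2 ≤ 2 * u.2 + u.1 + 2 := Iff.rfl

theorem mem_brickRegion {z : ℝ × ℝ} : z ∈ brickRegion S ↔ ∃ u ∈ S, z ∈ brick u := by
  simp [brickRegion]

theorem brickRegion_union (S T : Set (ℤ × ℤ)) :
    brickRegion (S ∪ T) = brickRegion S ∪ brickRegion T := Set.biUnion_union _ _ _

theorem isCompact_brick (u : ℤ × ℤ) : IsCompact (brick u) := isCompact_Icc.prod isCompact_Icc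

theorem isCompact_brickRegion (hS : S.Finite) : IsCompact (brickRegion S) :=
  hS.isCompact_biUnion fun u _ => isCompact_brick u

theorem eq_or_adj_of_mem_brick {z : ℝ × ℝ} (hu : z ∈ brick u) (hv : z ∈ brick v) :
    u = v ∨ brickGraph.Adj u v := by
  rw [mem_brick] at hu hv
  have h₁ : u.1 ≤ v.1 + 1 := by exact_mod_cast hu.1.1.trans hv.1.2
  have h₂ : v.1 ≤ u.1 + 1 := by exact_mod_cast hv.1.1.trans hu.1.2
  have h₃ : 2 * u.2 + u.1 ≤ 2 * v.2 + v.1 + 2 := by exact_mod_cast hu.2.1.trans hv.2.2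
  have h₄ : 2 * v.2 + v.1 ≤ 2 * u.2 + u.1 + 2 := by exact_mod_cast hv.2.1.trans hu.2.2
  rw [brickGraph_adj, Prod.ext_iff]
  lia

theorem brickRegion_singleton_prod_Icc {k a b : ℤ} (hab : a ≤ b) :
    brickRegion ({k} ×ˢ Set.Icc a b) =
      Set.Icc (k : ℝ) (k + 1) ×ˢ Set.Icc (2 * a + k : ℝ) (2 * b + k + 2) := by
  ext z
  simp only [mem_brickRegion, mem_brick, Prod.exists, Set.mem_prod, Set.mem_singleton_iff,
    Set.mem_Icc]
  constructor
  · rintro ⟨k, j, ⟨rfl, ha, hb⟩, h₁, h₂, h₃⟩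
    have ha' : (a : ℝ) ≤ j := by exact_mod_cast ha
    have hb' : (j : ℝ) ≤ b := by exact_mod_cast hb
    exact ⟨h₁, by linarith, by linarith⟩
  · rintro ⟨h₁, h₂, h₃⟩
    have hlow := Int.floor_le ((z.2 - k) / 2)
    have hhigh := Int.lt_floor_add_one ((z.2 - k) / 2)
    have ha : a ≤ ⌊(z.2 - k) / 2⌋ := Int.le_floor.2 (by linarith)
    obtain hb | hb := le_total ⌊(z.2 - k) / 2⌋ b
    · exact ⟨k, _, ⟨rfl, ha, hb⟩, h₁, by linarith, by linarith⟩
    · have hb' : (b : ℝ) ≤ ⌊(z.2 - k) / 2⌋ := by exact_mod_cast hb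
      exact ⟨k, b, ⟨rfl, hab, le_rfl⟩, h₁, by linarith, by linarith⟩

theorem exists_maximal_Icc_subset {S : Set ℤ} (hS : S.Finite) {n : ℤ} (hn : n ∈ S) :
    ∃ c d, n ∈ Set.Icc c d ∧ Set.Icc c d ⊆ S ∧ c - 1 ∉ S ∧ d + 1 ∉ S := by
  have hfin : {I | ∃ c d, I = Set.Icc c d ∧ n ∈ I ∧ I ⊆ S}.Finite :=
    hS.finite_subsets.subset fun I ⟨_, _, _, _, hI⟩ => hI
  obtain ⟨_, ⟨c, d, rfl, hncd, hcd⟩, hmax⟩ :=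
    hfin.exists_maximal ⟨Set.Icc n n, n, n, rfl, by simpa using hn⟩
  have hextend {c' d' : ℤ} (hc : c' ≤ c) (hd : d ≤ d') (hS : Set.Icc c' d' ⊆ S) :
      Set.Icc c' d' ⊆ Set.Icc c d :=
    hmax ⟨c', d', rfl, Set.Icc_subset_Icc hc hd hncd, hS⟩ (Set.Icc_subset_Icc hc hd)
  refine ⟨c, d, hncd, hcd, fun hc => ?_, fun hd => ?_⟩
  · have h := hextend (c' := c - 1) (by lia) le_rfl fun m hm =>
      (eq_or_ne m (c - 1)).elim (fun h => h ▸ hc) fun h => hcd ⟨by grind, hm.2⟩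
    exact absurd (h ⟨le_rfl, by grind⟩).1 (by lia)
  · have h := hextend (d' := d + 1) le_rfl (by lia) fun m hm =>
      (eq_or_ne m (d + 1)).elim (fun h => h ▸ hd) fun h => hcd ⟨hm.1, by grind⟩
    exact absurd (h ⟨by grind, le_rfl⟩).2 (by lia)

theorem walkConnected_singleton_prod_Icc (k a b : ℤ) :
    WalkConnected brickGraph ({k} ×ˢ Set.Icc a b) := by
  have hwalk (j : ℤ) (hj : a ≤ j) : ∃ p : brickGraph.Walk (k, a) (k, j),
      ∀ w ∈ p.support, w ∈ ({k} : Set ℤ) ×ˢ Set.Icc a j := by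
    induction j, hj using Int.leInduction with
    | base => exact ⟨.nil, by simp⟩
    | succ j hj ih =>
      obtain ⟨p, hp⟩ := ih
      have hadj : brickGraph.Adj (k, j) (k, j + 1) := .inl ⟨rfl, .inl rfl⟩
      refine ⟨p.concat hadj, fun w hw => ?_⟩
      rw [SimpleGraph.Walk.support_concat, List.mem_append, List.mem_singleton] at hw
      obtain hw | rfl := hw
      · exact ⟨(hp w hw).1, (hp w hw).2.1, (hp w hw).2.2.trans (by lia)⟩
      · exact ⟨rfl, hj.trans (by lia), le_rfl⟩
  refine .of_forall_walk_from (u := (k, a)) ?_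
  rintro ⟨_, j⟩ ⟨rfl, hj⟩
  obtain ⟨p, hp⟩ := hwalk j hj.1
  exact ⟨p, fun w hw => ⟨(hp w hw).1, (hp w hw).2.1, (hp w hw).2.2.trans hj.2⟩⟩

theorem IsUnionOfColumns.union (hS : IsUnionOfColumns H S) (hT : IsUnionOfColumns H T) :
    IsUnionOfColumns H (S ∪ T) :=
  ⟨Set.union_subset hS.1 hT.1, fun u hu v hv huv h =>
    hu.imp (fun hu => hS.2 u hu v hv huv h) fun hu => hT.2 u hu v hv huv h⟩

theorem IsUnionOfColumns.disjoint_of_notMem (hT : IsUnionOfColumns H T) {k a b : ℤ}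
    (hH : {k} ×ˢ Set.Icc a b ⊆ H) (hv : v ∈ {k} ×ˢ Set.Icc a b) (hvT : v ∉ T) :
    Disjoint T ({k} ×ˢ Set.Icc a b) := by
  by_contra hmeet
  rw [Set.not_disjoint_iff_nonempty_inter] at hmeet
  obtain ⟨u, hu, w, hw, huw⟩ := (walkConnected_singleton_prod_Icc k a b).exists_adj hmeet
    ⟨Set.inter_subset_right, fun h => hvT (h hv).1⟩
  exact hw.2 ⟨hT.2 u hu.1 w (hH hw.1) huw (hu.2.1.trans hw.1.1.symm), hw.1⟩

theorem exists_isUnionOfColumns_mem (hH : H.Finite) (hv : v ∈ H) :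
    ∃ a b, v ∈ ({v.1} : Set ℤ) ×ˢ Set.Icc a b ∧ IsUnionOfColumns H ({v.1} ×ˢ Set.Icc a b) := by
  obtain ⟨a, b, hvab, hab, ha, hb⟩ := exists_maximal_Icc_subset (S := {j | (v.1, j) ∈ H})
    (hH.preimage (Prod.mk_right_injective v.1).injOn) hv
  refine ⟨a, b, ⟨rfl, hvab⟩, ?_, ?_⟩
  · rintro ⟨_, j⟩ ⟨rfl, hj⟩
    exact hab hj
  · rintro ⟨_, j⟩ ⟨rfl, hj⟩ ⟨_, j'⟩ hj' hadj rfl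
    have ha' : j' ≠ a - 1 := fun h => ha (h ▸ hj')
    have hb' : j' ≠ b + 1 := fun h => hb (h ▸ hj')
    simp only [brickGraph_adj, Set.mem_Icc] at hadj hj
    exact ⟨rfl, Set.mem_Icc.2 (by lia)⟩

end Bricks

section Growth

variable {H P Q T : Set (ℤ × ℤ)} {i c d : ℤ}

theorem Icc_prod_subset_brickRegion {k : ℤ} {f : ℤ → ℤ} (hcd : c ≤ d)
    (hf : ∀ m ∈ Set.Icc c d, (k, f m) ∈ P)
    (hlevel : ∀ m, 2 * f m + k ≤ m + 1 + i ∧ m + i ≤ 2 * f m + k) :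
    Set.Icc (k : ℝ) (k + 1) ×ˢ Set.Icc (c + 1 + i : ℝ) (d + 2 + i) ⊆ brickRegion P := by
  rintro z ⟨hz₁, hz₂, hz₃⟩
  obtain ⟨m, hm, hmz, hzm⟩ : ∃ m ∈ Set.Icc c d, m + 1 + i ≤ z.2 ∧ z.2 ≤ m + 2 + i := by
    have hlow := Int.floor_le (z.2 - 1 - i)
    have hhigh := Int.lt_floor_add_one (z.2 - 1 - i)
    have hc : c ≤ ⌊z.2 - 1 - i⌋ := Int.le_floor.2 (by linarith)
    obtain hd | hd := le_total ⌊z.2 - 1 - i⌋ d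
    · exact ⟨_, ⟨hc, hd⟩, by linarith, by linarith⟩
    · have hd' : (d : ℝ) ≤ ⌊z.2 - 1 - i⌋ := by exact_mod_cast hd
      exact ⟨d, ⟨hcd, le_rfl⟩, by linarith, by linarith⟩
  have h₁ : (2 * f m + k : ℝ) ≤ m + 1 + i := by exact_mod_cast (hlevel m).1
  have h₂ : (m + i : ℝ) ≤ 2 * f m + k := by exact_mod_cast (hlevel m).2
  exact mem_brickRegion.2 ⟨_, hf m hm, hz₁, h₁.trans hmz, by simp only; linarith⟩

/-- `P` in column `i` and `Q` in column `i + 1` touch exactly along the boundary segment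
with levels `c, …, d`. -/
structure IsContact (P Q : Set (ℤ × ℤ)) (i c d : ℤ) : Prop where
  le : c ≤ d
  mem : ∀ m ∈ Set.Icc c d, (i, (m + 1) / 2) ∈ P ∧ (i + 1, m / 2) ∈ Q
  mem_Icc : ∀ p ∈ P, ∀ q ∈ Q, brickGraph.Adj p q → p.1 = i ∧ q.1 = i + 1 ∧ p.2 + q.2 ∈ Set.Icc c d
  disjoint : Disjoint P Q

theorem exists_isContact (hfin : H.Finite) (hH : HasNoHoles brickGraph H)
    (hP : IsUnionOfColumns H P) (hPc : WalkConnected brickGraph P)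
    (hQ : IsUnionOfColumns H Q) (hQc : WalkConnected brickGraph Q) (hPQ : Disjoint P Q)
    {p q : ℤ × ℤ} (hp : p ∈ P) (hq : q ∈ Q) (hpq : brickGraph.Adj p q) (hlt : q.1 = p.1 + 1) :
    ∃ c d, IsContact P Q p.1 c d := by
  have hpn : (p.1, (p.2 + q.2 + 1) / 2) = p := Prod.ext rfl (by rw [brickGraph_adj] at hpq; lia)
  have hqn : (p.1 + 1, (p.2 + q.2) / 2) = q :=
    Prod.ext hlt.symm (by rw [brickGraph_adj] at hpq; lia)
  have hlevels : {m | IsInnerLevel H p.1 m}.Finite := by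
    refine ((hfin.prod hfin).preimage (f := fun m => ((p.1, (m + 1) / 2), (p.1 + 1, m / 2)))
      fun m _ m' _ h => ?_).subset fun m hm => hm
    simp only [Prod.ext_iff] at h
    lia
  obtain ⟨c, d, hn, hcd, hc, hd⟩ := exists_maximal_Icc_subset hlevels (n := p.2 + q.2)
    ⟨hpn.symm ▸ hP.1 hp, hqn.symm ▸ hQ.1 hq⟩
  have hmem := hP.mem_of_isInnerLevel hQ hcd hn (hpn.symm ▸ hp) (hqn.symm ▸ hq)
  exact ⟨c, d, hn.1.trans hn.2, hmem, fun p' hp' q' hq' h =>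
    mem_Icc_of_adj_of_hasNoHoles hH hPc hQc hP.1 hQ.1 hPQ hc hd hmem hn hp' hq' h, hPQ⟩

namespace IsContact

theorem subset_left (h : IsContact P Q i c d) :
    Set.Icc (i : ℝ) (i + 1) ×ˢ Set.Icc (c + 1 + i : ℝ) (d + 2 + i) ⊆ brickRegion P :=
  Icc_prod_subset_brickRegion h.le (fun m hm => (h.mem m hm).1) fun m => by lia

theorem subset_right (h : IsContact P Q i c d) :
    Set.Icc (i + 1 : ℝ) (i + 2) ×ˢ Set.Icc (c + 1 + i : ℝ) (d + 2 + i) ⊆ brickRegion Q := by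
  have hsub := Icc_prod_subset_brickRegion h.le (fun m hm => (h.mem m hm).2) (i := i)
    fun m => by lia
  rwa [Int.cast_add, Int.cast_one, add_assoc (i : ℝ), one_add_one_eq_two] at hsub

theorem inter_subset (h : IsContact P Q i c d) :
    brickRegion P ∩ brickRegion Q ⊆ {(i + 1 : ℝ)} ×ˢ Set.Icc (c + 1 + i : ℝ) (d + 2 + i) := by
  rintro z ⟨hzP, hzQ⟩
  obtain ⟨p, hp, hzp⟩ := mem_brickRegion.1 hzP
  obtain ⟨q, hq, hzq⟩ := mem_brickRegion.1 hzQ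
  obtain rfl | hpq := eq_or_adj_of_mem_brick hzp hzq
  · exact absurd hq (Set.disjoint_left.1 h.disjoint hp)
  obtain ⟨hpi, hqi, hc, hd⟩ := h.mem_Icc p hp q hq hpq
  rw [mem_brick] at hzp hzq
  have hpi' : (p.1 : ℝ) = i := by exact_mod_cast hpi
  have hqi' : (q.1 : ℝ) = i + 1 := by exact_mod_cast hqi
  have hc' : (c : ℝ) ≤ p.2 + q.2 := by exact_mod_cast hc
  have hd' : (p.2 + q.2 : ℝ) ≤ d := by exact_mod_cast hd
  have hpq₂ : (q.2 : ℝ) = p.2 ∨ (q.2 : ℝ) = p.2 - 1 := by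
    rw [brickGraph_adj] at hpq
    exact_mod_cast (by lia : q.2 = p.2 ∨ q.2 = p.2 - 1)
  obtain hpq₂ | hpq₂ := hpq₂ <;>
    exact ⟨Set.mem_singleton_iff.2 (by linarith), by linarith, by linarith⟩

theorem nonempty_homeomorph_union_of_eq_right (h : IsContact P Q i c d) (hP : P.Finite)
    {a b : ℤ} (hQ : Q = {i + 1} ×ˢ Set.Icc a b) :
    Nonempty (brickRegion (P ∪ Q) ≃ₜ brickRegion P) := by
  subst hQ
  obtain ⟨-, hac, hcb⟩ := (h.mem c ⟨le_rfl, h.le⟩).2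
  obtain ⟨-, -, hdb⟩ := (h.mem d ⟨h.le, le_rfl⟩).2
  have hab := hac.trans hcb
  have hs : (c + 1 + i : ℝ) < d + 2 + i := by exact_mod_cast (by linarith [h.le])
  have hr₀ : (2 * a + (i + 1 : ℤ) : ℝ) ≤ c + 1 + i := by exact_mod_cast (by lia)
  have hr₁ : (d + 2 + i : ℝ) ≤ 2 * b + (i + 1 : ℤ) + 2 := by exact_mod_cast (by lia)
  have hcollar := h.subset_left
  have hmeet := h.inter_subset
  rw [brickRegion_singleton_prod_Icc hab] at hmeet
  rw [brickRegion_union, brickRegion_singleton_prod_Icc hab]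
  rw [← Set.uIcc_of_le (by linarith)] at hcollar
  have hblock : Set.Icc ((i + 1 : ℤ) : ℝ) ((i + 1 : ℤ) + 1) =
      Set.uIcc (i + 1 : ℝ) (2 * (i + 1) - i) := by
    rw [Set.uIcc_of_le (by linarith)]
    push_cast
    ring_nf
  rw [hblock] at hmeet ⊢
  exact nonempty_homeomorph_union_uIcc_prod_Icc (isCompact_brickRegion hP) (by simp) hs hr₀ hr₁
    hcollar hmeet

theorem nonempty_homeomorph_union_of_eq_left (h : IsContact P Q i c d) (hQ : Q.Finite)
    {a b : ℤ} (hP : P = {i} ×ˢ Set.Icc a b) :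
    Nonempty (brickRegion (Q ∪ P) ≃ₜ brickRegion Q) := by
  subst hP
  obtain ⟨-, hac, hcb⟩ := (h.mem c ⟨le_rfl, h.le⟩).1
  obtain ⟨-, -, hdb⟩ := (h.mem d ⟨h.le, le_rfl⟩).1
  have hab := hac.trans hcb
  have hs : (c + 1 + i : ℝ) < d + 2 + i := by exact_mod_cast (by linarith [h.le])
  have hr₀ : (2 * a + i : ℝ) ≤ c + 1 + i := by exact_mod_cast (by lia)
  have hr₁ : (d + 2 + i : ℝ) ≤ 2 * b + i + 2 := by exact_mod_cast (by lia)
  have hcollar := h.subset_right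
  have hmeet := h.inter_subset
  rw [Set.inter_comm, brickRegion_singleton_prod_Icc hab] at hmeet
  rw [brickRegion_union, brickRegion_singleton_prod_Icc hab]
  rw [← Set.uIcc_of_ge (by linarith)] at hcollar
  have hblock : Set.Icc (i : ℝ) (i + 1) = Set.uIcc (i + 1 : ℝ) (2 * (i + 1) - (i + 2)) := by
    rw [Set.uIcc_of_ge (by linarith)]
    ring_nf
  rw [hblock] at hmeet ⊢
  exact nonempty_homeomorph_union_uIcc_prod_Icc (isCompact_brickRegion hQ) (by simp) hs hr₀ hr₁
    hcollar hmeet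

end IsContact

theorem exists_isUnionOfColumns_homeomorph_of_ne (hfin : H.Finite)
    (hHc : WalkConnected brickGraph H) (hH : HasNoHoles brickGraph H) (hT : IsUnionOfColumns H T)
    (hTc : WalkConnected brickGraph T) (hTne : T.Nonempty) (hTH : T ≠ H) :
    ∃ R, ¬R ⊆ T ∧ IsUnionOfColumns H (T ∪ R) ∧ WalkConnected brickGraph (T ∪ R) ∧
      Nonempty (brickRegion (T ∪ R) ≃ₜ brickRegion T) := by
  obtain ⟨u, hu, v, hv, huv⟩ := hHc.exists_adj hTne (hT.1.ssubset_of_ne hTH)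
  obtain ⟨a, b, hvR, hR⟩ := exists_isUnionOfColumns_mem hfin hv.1
  have hRc := walkConnected_singleton_prod_Icc v.1 a b
  have hTR := hT.disjoint_of_notMem hR.1 hvR hv.2
  have hTfin := hfin.subset hT.1
  refine ⟨_, fun h => hv.2 (h hvR), hT.union hR, hTc.union hRc hu hvR huv, ?_⟩
  have hne : u.1 ≠ v.1 := fun h => hv.2 (hT.2 u hu v hv.1 huv h)
  obtain hlt | hlt : v.1 = u.1 + 1 ∨ u.1 = v.1 + 1 := by
    rw [brickGraph_adj] at huv
    lia
  · obtain ⟨c, d, hcontact⟩ := exists_isContact hfin hH hT hTc hR hRc hTR hu hvR huv hlt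
    exact hcontact.nonempty_homeomorph_union_of_eq_right hTfin (by rw [hlt])
  · obtain ⟨c, d, hcontact⟩ :=
      exists_isContact hfin hH hR hRc hT hTc hTR.symm hvR hu huv.symm hlt
    exact hcontact.nonempty_homeomorph_union_of_eq_left hTfin rfl

/-- Attaching columns of bricks one by one, each along one segment, preserves topological disks. -/
theorem nonempty_homeomorph_brickRegion_closedBall (hfin : H.Finite) (hHne : H.Nonempty)
    (hHc : WalkConnected brickGraph H) (hH : HasNoHoles brickGraph H) :
    Nonempty (brickRegion H ≃ₜ Metric.closedBall (0 : Plane) 1) := by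
  let IsDisk (T : Set (ℤ × ℤ)) : Prop := IsUnionOfColumns H T ∧ WalkConnected brickGraph T ∧
    T.Nonempty ∧ Nonempty (brickRegion T ≃ₜ Metric.closedBall (0 : Plane) 1)
  obtain ⟨v, hv⟩ := hHne
  obtain ⟨a, b, hvab, hab⟩ := exists_isUnionOfColumns_mem hfin hv
  have hbase : IsDisk ({v.1} ×ˢ Set.Icc a b) := by
    refine ⟨hab, walkConnected_singleton_prod_Icc _ _ _, ⟨v, hvab⟩, ?_⟩
    rw [brickRegion_singleton_prod_Icc (hvab.2.1.trans hvab.2.2)]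
    have hlt : (2 * a + v.1 : ℝ) < 2 * b + v.1 + 2 := by
      exact_mod_cast (by linarith [hvab.2.1.trans hvab.2.2])
    refine nonempty_homeomorph_closedBall_of_convex (ContinuousLinearEquiv.ofFinrankEq (by simp))
      ((convex_Icc _ _).prod (convex_Icc _ _)) (isCompact_Icc.prod isCompact_Icc).isBounded
      (isClosed_Icc.prod isClosed_Icc) ?_
    rw [interior_prod_eq, interior_Icc, interior_Icc]
    exact (Set.nonempty_Ioo.2 (lt_add_one _)).prod (Set.nonempty_Ioo.2 hlt)
  obtain ⟨T, ⟨hT, hTc, hTne, ⟨e⟩⟩, hmax⟩ := (hfin.finite_subsets.subset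
    fun T (hT : IsDisk T) => hT.1.1).exists_maximal ⟨_, hbase⟩
  obtain rfl | hTH := eq_or_ne T H
  · exact ⟨e⟩
  obtain ⟨R, hRT, hTR, hTRc, ⟨e'⟩⟩ :=
    exists_isUnionOfColumns_homeomorph_of_ne hfin hHc hH hT hTc hTne hTH
  exact absurd (Set.subset_union_right.trans
    (hmax ⟨hTR, hTRc, hTne.mono Set.subset_union_left, ⟨e'.trans e⟩⟩ Set.subset_union_left)) hRT

end Growth

/-! ### Area and perimeter of brick regions -/

section Measure

variable {H : Finset (ℤ × ℤ)} {u v : ℤ × ℤ}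

theorem inter_brick_subset_of_adj (h : brickGraph.Adj u v) :
    (∃ x y : ℝ, brick u ∩ brick v ⊆ {x} ×ˢ Set.Icc y (y + 1)) ∨
      ∃ x y : ℝ, brick u ∩ brick v ⊆ Set.Icc x (x + 1) ×ˢ {y} := by
  wlog huv : u.1 = v.1 ∧ v.2 = u.2 + 1 ∨ v.1 = u.1 + 1 ∧ (v.2 = u.2 ∨ v.2 = u.2 - 1)
    generalizing u v
  · rw [Set.inter_comm]
    exact this h.symm (by rw [brickGraph_adj] at h; lia)
  obtain ⟨i, j⟩ := u
  obtain ⟨i', j'⟩ := v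
  simp only at huv
  obtain ⟨rfl, rfl⟩ | ⟨rfl, rfl | rfl⟩ := huv
  · refine .inr ⟨i, 2 * j + i + 2, fun z ⟨hu, hv⟩ => ?_⟩
    simp only [mem_brick, Int.cast_add, Int.cast_one] at hu hv
    exact ⟨hu.1, hu.2.2.antisymm (by linarith)⟩
  · refine .inl ⟨i + 1, 2 * j' + i + 1, fun z ⟨hu, hv⟩ => ?_⟩
    simp only [mem_brick, Int.cast_add, Int.cast_one] at hu hv
    exact ⟨hu.1.2.antisymm hv.1.1, by linarith, by linarith⟩
  · refine .inl ⟨i + 1, 2 * j + i, fun z ⟨hu, hv⟩ => ?_⟩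
    simp only [mem_brick, Int.cast_add, Int.cast_one, Int.cast_sub] at hu hv
    exact ⟨hu.1.2.antisymm hv.1.1, by linarith, by linarith⟩

theorem volume_brick (u : ℤ × ℤ) : volume (brick u) = 2 := by
  rw [brick, Measure.volume_eq_prod, Measure.prod_prod, Real.volume_Icc, Real.volume_Icc]
  simp

theorem volume_inter_brick_of_ne (huv : u ≠ v) : volume (brick u ∩ brick v) = 0 := by
  by_cases hadj : brickGraph.Adj u v
  · obtain ⟨x, y, h⟩ | ⟨x, y, h⟩ := inter_brick_subset_of_adj hadj <;>
      refine measure_mono_null h ?_ <;>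
      rw [Measure.volume_eq_prod, Measure.prod_prod, Real.volume_singleton] <;> simp
  · have hempty : brick u ∩ brick v = ∅ := Set.eq_empty_of_forall_notMem fun z hz =>
      (eq_or_adj_of_mem_brick hz.1 hz.2).elim huv hadj
    rw [hempty, measure_empty]

theorem volume_brickRegion (H : Finset (ℤ × ℤ)) :
    volume (brickRegion (H : Set (ℤ × ℤ))) = 2 * H.card := by
  rw [brickRegion]
  simp only [Finset.mem_coe]
  rw [measure_biUnion_finset₀ (fun u _ v _ huv => volume_inter_brick_of_ne huv)
    fun u _ => (isCompact_brick u).measurableSet.nullMeasurableSet]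
  simp [volume_brick, mul_comm]

/-- The brick containing a given point, the one to the upper right in case of ambiguity. -/
noncomputable def brickIndex (z : ℝ × ℝ) : ℤ × ℤ := (⌊z.1⌋, ⌊(z.2 - ⌊z.1⌋) / 2⌋)

theorem brickIndex_eq_iff {z : ℝ × ℝ} : brickIndex z = u ↔
    (u.1 ≤ z.1 ∧ z.1 < u.1 + 1) ∧ 2 * u.2 + u.1 ≤ z.2 ∧ z.2 < 2 * u.2 + u.1 + 2 := by
  rw [brickIndex, Prod.ext_iff, Int.floor_eq_iff]
  refine and_congr_right fun h => ?_
  rw [Int.floor_eq_iff.2 h, Int.floor_eq_iff, le_div_iff₀ two_pos, div_lt_iff₀ two_pos]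
  constructor <;> rintro ⟨h₁, h₂⟩ <;> constructor <;> linarith

theorem mem_brick_brickIndex (z : ℝ × ℝ) : z ∈ brick (brickIndex z) := by
  obtain ⟨h₁, h₂⟩ := brickIndex_eq_iff.1 (rfl : brickIndex z = _)
  exact ⟨⟨h₁.1, h₁.2.le⟩, h₂.1, h₂.2.le⟩

theorem mem_brick_iff_brickIndex_eq {z : ℝ × ℝ} (h₁ : ∀ n : ℤ, z.1 ≠ n) (h₂ : ∀ n : ℤ, z.2 ≠ n) :
    z ∈ brick u ↔ brickIndex z = u := by
  rw [brickIndex_eq_iff, mem_brick, le_iff_lt_or_eq (b := (u.1 + 1 : ℝ)),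
    le_iff_lt_or_eq (b := (2 * u.2 + u.1 + 2 : ℝ)), or_iff_left, or_iff_left]
  · exact_mod_cast h₂ (2 * u.2 + u.1 + 2)
  · exact_mod_cast h₁ (u.1 + 1)

theorem locallyFinite_brick : LocallyFinite brick := by
  intro z
  refine ⟨Metric.closedBall z 1, Metric.closedBall_mem_nhds z one_pos, ?_⟩
  refine ((Set.finite_Icc (⌊z.1⌋ - 2) (⌊z.1⌋ + 2)).prod
    (Set.finite_Icc (⌊(z.2 - z.1) / 2⌋ - 3) (⌊(z.2 - z.1) / 2⌋ + 3))).subset ?_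
  rintro u ⟨w, hu, hw⟩
  rw [mem_brick] at hu
  rw [Metric.mem_closedBall, Prod.dist_eq, max_le_iff, Real.dist_eq, Real.dist_eq, abs_le,
    abs_le] at hw
  have h₁ := Int.floor_le z.1
  have h₂ := Int.lt_floor_add_one z.1
  have h₃ := Int.floor_le ((z.2 - z.1) / 2)
  have h₄ := Int.lt_floor_add_one ((z.2 - z.1) / 2)
  have h (a b : ℤ) (h : (a : ℝ) < b + 1) : a ≤ b := Int.lt_add_one_iff.1 (by exact_mod_cast h)
  refine ⟨⟨h _ _ ?_, h _ _ ?_⟩, h _ _ ?_, h _ _ ?_⟩ <;> push_cast <;> linarith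

theorem frontier_brickRegion_subset (H : Finset (ℤ × ℤ)) :
    frontier (brickRegion (H : Set (ℤ × ℤ))) ⊆
      ⋃ e ∈ edgeBoundary brickGraph H, brick e.1 ∩ brick e.2 := by
  have hclosed : IsClosed (brickRegion (H : Set (ℤ × ℤ))ᶜ) := by
    rw [brickRegion, Set.biUnion_eq_iUnion]
    exact (locallyFinite_brick.comp_injective Subtype.val_injective).isClosed_iUnion
      fun u => (isCompact_brick u).isClosed
  have hcompl : (brickRegion (H : Set (ℤ × ℤ)))ᶜ ⊆ brickRegion (H : Set (ℤ × ℤ))ᶜ := fun z hz =>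
    mem_brickRegion.2 ⟨_, fun h => hz (mem_brickRegion.2 ⟨_, h, mem_brick_brickIndex z⟩),
      mem_brick_brickIndex z⟩
  intro z hz
  rw [frontier_eq_closure_inter_closure,
    (isCompact_brickRegion H.finite_toSet).isClosed.closure_eq] at hz
  obtain ⟨u, hu, hzu⟩ := mem_brickRegion.1 hz.1
  obtain ⟨v, hv, hzv⟩ := mem_brickRegion.1 (closure_minimal hcompl hclosed hz.2)
  have hadj := (eq_or_adj_of_mem_brick hzu hzv).resolve_left fun h => hv (h ▸ hu)
  exact Set.mem_biUnion (x := ⟨u, v⟩) (mem_edgeBoundary.2 ⟨hu, hadj, hv⟩) ⟨hzu, hzv⟩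

end Measure

/-! ### Brick regions in the Euclidean plane -/

/-- The coordinates with origin `s` and mesh `D` on the Euclidean plane. -/
noncomputable def gridHomeo (s : Plane) (D : ℝ) (hD : D ≠ 0) : ℝ × ℝ ≃ₜ Plane where
  toFun z := !₂[s 0 + D * z.1, s 1 + D * z.2]
  invFun x := ((x 0 - s 0) / D, (x 1 - s 1) / D)
  left_inv z := by ext <;> simp [hD]
  right_inv x := by
    ext i
    fin_cases i <;> simp [mul_div_cancel₀, hD]
  continuous_toFun := by
    refine (PiLp.continuous_toLp 2 _).comp (continuous_pi fun i => ?_)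
    fin_cases i
    · exact continuous_const.add (continuous_const.mul continuous_fst)
    · exact continuous_const.add (continuous_const.mul continuous_snd)
  continuous_invFun := by fun_prop

section Grid

variable {s : Plane} {D : ℝ} {hD : D ≠ 0} {H : Finset (ℤ × ℤ)}

theorem gridHomeo_apply (z : ℝ × ℝ) :
    gridHomeo s D hD z = !₂[s 0 + D * z.1, s 1 + D * z.2] := rfl

open scoped Pointwise in
theorem volume_image_gridHomeo (S : Set (ℝ × ℝ)) :
    volume (gridHomeo s D hD '' S) = ENNReal.ofReal (D ^ 2) * volume S := by
  let W : ℝ × ℝ ≃ᵐ Plane :=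
    MeasurableEquiv.finTwoArrow.symm.trans (MeasurableEquiv.toLp 2 (Fin 2 → ℝ))
  have hW : MeasurePreserving W volume volume :=
    (PiLp.volume_preserving_toLp (Fin 2)).comp (volume_preserving_finTwoArrow ℝ).symm
  have himage : gridHomeo s D hD '' S = (s + ·) '' (D • (W '' S)) := by
    rw [← Set.image_smul, Set.image_image, Set.image_image]
    refine Set.image_congr fun z _ => ?_
    ext i
    fin_cases i <;> rfl
  rw [himage, Set.image_add_left, measure_preimage_add, Measure.addHaar_smul,
    finrank_euclideanSpace_fin, abs_of_nonneg (sq_nonneg D), W.image_eq_preimage_symm,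
    hW.symm.measure_preimage_equiv]

theorem gridHomeo_add_smul (z e : ℝ × ℝ) (t : ℝ) :
    gridHomeo s D hD (z + t • e) =
      gridHomeo s D hD z + t • (gridHomeo s D hD (z + e) - gridHomeo s D hD z) := by
  ext i
  fin_cases i <;> simp [gridHomeo_apply] <;> ring

theorem hausdorffMeasure_image_gridHomeo_segment_le (z e : ℝ × ℝ) :
    μH[1] (gridHomeo s D hD '' segment ℝ z (z + e)) ≤
      edist (gridHomeo s D hD z) (gridHomeo s D hD (z + e)) := by
  rw [← hausdorffMeasure_segment, segment_eq_image', segment_eq_image', Set.image_image]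
  simp only [add_sub_cancel_left, gridHomeo_add_smul, le_refl]

theorem hausdorffMeasure_image_inter_brick_le (hD₀ : 0 < D) {u v : ℤ × ℤ}
    (h : brickGraph.Adj u v) :
    μH[1] (gridHomeo s D hD₀.ne' '' (brick u ∩ brick v)) ≤ ENNReal.ofReal D := by
  have hside : ∀ z e : ℝ × ℝ, brick u ∩ brick v ⊆ segment ℝ z (z + e) →
      (e = (1, 0) ∨ e = (0, 1)) →
      μH[1] (gridHomeo s D hD₀.ne' '' (brick u ∩ brick v)) ≤ ENNReal.ofReal D := by
    intro z e hsub he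
    refine (measure_mono (Set.image_mono hsub)).trans
      ((hausdorffMeasure_image_gridHomeo_segment_le z e).trans_eq ?_)
    rw [edist_dist, EuclideanSpace.dist_eq, Fin.sum_univ_two]
    rcases he with rfl | rfl <;>
      simp [gridHomeo_apply, mul_add, abs_of_pos hD₀, Real.sqrt_sq hD₀.le]
  rcases inter_brick_subset_of_adj h with ⟨x, y, hxy⟩ | ⟨x, y, hxy⟩
  · refine hside (x, y) (0, 1) ?_ (Or.inr rfl)
    rwa [Prod.mk_add_mk, add_zero, ← Prod.image_mk_segment_right, segment_eq_Icc (by linarith),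
      ← Set.singleton_prod]
  · refine hside (x, y) (1, 0) ?_ (Or.inl rfl)
    rwa [Prod.mk_add_mk, add_zero, ← Prod.image_mk_segment_left, segment_eq_Icc (by linarith),
      ← Set.prod_singleton]

theorem hausdorffMeasure_frontier_image_brickRegion_le (hD₀ : 0 < D) (H : Finset (ℤ × ℤ)) :
    μH[1] (frontier (gridHomeo s D hD₀.ne' '' brickRegion (H : Set (ℤ × ℤ)))) ≤
      ENNReal.ofReal (D * (edgeBoundary brickGraph H).card) := by
  let g := gridHomeo s D hD₀.ne'
  calc μH[1] (frontier (g '' brickRegion (H : Set (ℤ × ℤ))))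
      = μH[1] (g '' frontier (brickRegion (H : Set (ℤ × ℤ)))) := by rw [g.image_frontier]
    _ ≤ μH[1] (⋃ e ∈ edgeBoundary brickGraph H, g '' (brick e.1 ∩ brick e.2)) := by
      rw [← Set.image_iUnion₂]
      exact measure_mono (Set.image_mono (frontier_brickRegion_subset H))
    _ ≤ ∑ e ∈ edgeBoundary brickGraph H, μH[1] (g '' (brick e.1 ∩ brick e.2)) :=
      measure_biUnion_finset_le _ _
    _ ≤ ∑ _e ∈ edgeBoundary brickGraph H, ENNReal.ofReal D :=
      Finset.sum_le_sum fun e he =>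
        hausdorffMeasure_image_inter_brick_le hD₀ (mem_edgeBoundary.1 he).2.1
    _ = ENNReal.ofReal (D * (edgeBoundary brickGraph H).card) := by
      rw [Finset.sum_const, nsmul_eq_mul, mul_comm, ENNReal.ofReal_mul hD₀.le,
        ENNReal.ofReal_natCast]

end Grid

theorem dist_gridHomeo_le {s : Plane} {D : ℝ} (hD : 0 < D) (z w : ℝ × ℝ) :
    dist (gridHomeo s D hD.ne' z) (gridHomeo s D hD.ne' w) ≤ 2 * D * dist z w := by
  have h₁ : |D * (z.1 - w.1)| ≤ D * dist z w := by
    rw [abs_mul, abs_of_pos hD, ← Real.dist_eq]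
    gcongr
    exact le_max_left _ _
  have h₂ : |D * (z.2 - w.2)| ≤ D * dist z w := by
    rw [abs_mul, abs_of_pos hD, ← Real.dist_eq]
    gcongr
    exact le_max_right _ _
  have hdist : 0 ≤ D * dist z w := by positivity
  rw [EuclideanSpace.dist_eq, Fin.sum_univ_two, Real.sqrt_le_iff]
  refine ⟨by positivity, ?_⟩
  simp only [gridHomeo_apply, PiLp.toLp_apply, Real.dist_eq, Matrix.cons_val_zero,
    Matrix.cons_val_one, add_sub_add_left_eq_sub, ← mul_sub]
  nlinarith [sq_le_sq' (by linarith [abs_nonneg (D * (z.1 - w.1))]) h₁,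
    sq_le_sq' (by linarith [abs_nonneg (D * (z.2 - w.2))]) h₂]

theorem dist_gridHomeo_zero (s : Plane) {D : ℝ} (hD : D ≠ 0) (z : ℝ × ℝ) :
    dist (gridHomeo s D hD z) (gridHomeo 0 D hD z) = ‖s‖ := by
  rw [dist_eq_norm]
  congr 1
  ext i
  fin_cases i <;> simp [gridHomeo_apply]

theorem dist_le_of_mem_brick {u v : ℤ × ℤ} (huv : u = v ∨ brickGraph.Adj u v) {z w : ℝ × ℝ}
    (hz : z ∈ brick u) (hw : w ∈ brick v) : dist z w ≤ 4 := by
  rw [brickGraph_adj, Prod.ext_iff] at huv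
  have h₁ : |u.1 - v.1| ≤ 1 := by rw [abs_le]; lia
  have h₂ : |(2 * u.2 + u.1) - (2 * v.2 + v.1)| ≤ 2 := by rw [abs_le]; lia
  rw [mem_brick] at hz hw
  have h₁' : |(u.1 - v.1 : ℝ)| ≤ 1 := by exact_mod_cast h₁
  have h₂' : |((2 * u.2 + u.1) - (2 * v.2 + v.1) : ℝ)| ≤ 2 := by exact_mod_cast h₂
  rw [abs_le] at h₁' h₂'
  rw [Prod.dist_eq, Real.dist_eq, Real.dist_eq]
  refine max_le (abs_le.2 ?_) (abs_le.2 ?_) <;> constructor <;> linarith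

/-! ### Counting points in bricks -/

theorem countable_of_finite_inter_bounded {α : Type*} [PseudoMetricSpace α] {X : Set α}
    (hX : ∀ s, Bornology.IsBounded s → (X ∩ s).Finite) : X.Countable := by
  obtain hα | ⟨⟨p⟩⟩ := isEmpty_or_nonempty α
  · exact X.toFinite.countable
  rw [← Set.inter_univ X, ← Metric.iUnion_closedBall_nat p, Set.inter_iUnion]
  exact Set.countable_iUnion fun n => (hX _ Metric.isBounded_closedBall).countable

/-- No point of `X` lies on a line of the grid with origin `s` and mesh `D`. -/
def IsOffGrid (X : Set Plane) (s : Plane) (D : ℝ) : Prop :=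
  ∀ x ∈ X, ∀ i, ∀ n : ℤ, (x i - s i) / D ≠ n

theorem exists_isOffGrid {X : Set Plane} (hX : X.Countable) {D : ℝ} (hD : D ≠ 0) :
    ∃ s, IsOffGrid X s D := by
  have hcoord (i : Fin 2) : ∃ t : ℝ, ∀ x ∈ X, ∀ n : ℤ, (x i - t) / D ≠ n := by
    have hcount : (⋃ n : ℤ, (fun x : Plane => x i - n * D) '' X).Countable :=
      Set.countable_iUnion fun n => hX.image _
    obtain ⟨t, ht⟩ := (hcount.dense_compl ℝ).nonempty
    refine ⟨t, fun x hx n hn => ht (Set.mem_iUnion.2 ⟨n, x, hx, ?_⟩)⟩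
    rw [← (div_eq_iff hD).1 hn]
    exact sub_sub_cancel _ _
  choose t ht using hcoord
  exact ⟨WithLp.toLp 2 t, fun x hx i n => ht i x hx n⟩

section Count

variable {X : Set Plane} {s : Plane} {D : ℝ} (hD : 0 < D)

/-- The brick which contains the point `x`, in the coordinates with origin `s` and mesh `D`. -/
noncomputable def brickOf (s : Plane) {D : ℝ} (hD : 0 < D) (x : Plane) : ℤ × ℤ :=
  brickIndex ((gridHomeo s D hD.ne').symm x)

theorem IsOffGrid.mem_image_brickRegion_iff (hs : IsOffGrid X s D) {x : Plane} (hx : x ∈ X)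
    {H : Set (ℤ × ℤ)} :
    x ∈ gridHomeo s D hD.ne' '' brickRegion H ↔ brickOf s hD x ∈ H := by
  rw [Homeomorph.image_eq_preimage_symm, Set.mem_preimage, mem_brickRegion]
  simp only [mem_brick_iff_brickIndex_eq (z := (gridHomeo s D hD.ne').symm x) (hs x hx 0)
    (hs x hx 1), brickOf, exists_eq_right']

theorem IsOffGrid.ncard_inter_image_brickRegion (hs : IsOffGrid X s D) (H : Set (ℤ × ℤ)) :
    (X ∩ gridHomeo s D hD.ne' '' brickRegion H).ncard =
      ((fun x : X => brickOf s hD x) ⁻¹' H).ncard := by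
  rw [← Set.ncard_image_of_injective _ Subtype.val_injective]
  congr 1
  ext x
  simp only [Set.mem_inter_iff, Set.mem_image, Set.mem_preimage, Subtype.exists, exists_and_right,
    exists_eq_right]
  exact ⟨fun h => ⟨h.1, (hs.mem_image_brickRegion_iff hD h.1).1 h.2⟩,
    fun ⟨hx, h⟩ => ⟨hx, (hs.mem_image_brickRegion_iff hD hx).2 h⟩⟩

theorem finite_preimage_brickOf (hX : ∀ s, Bornology.IsBounded s → (X ∩ s).Finite) (v : ℤ × ℤ) :
    ((fun x : X => brickOf s hD x) ⁻¹' {v}).Finite := by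
  refine Set.Finite.of_finite_image ((hX _ ((isCompact_brick v).image
    (gridHomeo s D hD.ne').continuous).isBounded).subset ?_) Subtype.val_injective.injOn
  rintro _ ⟨x, hx, rfl⟩
  exact ⟨x.2, _, hx ▸ mem_brick_brickIndex _, (gridHomeo s D hD.ne').apply_symm_apply _⟩

theorem abs_ncard_sub_le_of_hasDiscrepancyLE {ρ c₁ c₂ : ℝ} (h₁ : 0 ≤ c₁) (h₂ : 0 ≤ c₂)
    (h : HasDiscrepancyLE X ρ c₁ c₂) {H : Finset (ℤ × ℤ)} (hH : H.Nonempty)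
    (hHc : WalkConnected brickGraph (H : Set (ℤ × ℤ)))
    (hHh : HasNoHoles brickGraph (H : Set (ℤ × ℤ))) :
    |((X ∩ gridHomeo s D hD.ne' '' brickRegion H).ncard : ℝ) - ρ * (2 * D ^ 2) * H.card| ≤
      (c₁ + c₂ * D) * (edgeBoundary brickGraph H).card := by
  let g := gridHomeo s D hD.ne'
  obtain ⟨e⟩ := nonempty_homeomorph_brickRegion_closedBall H.finite_toSet hH hHc hHh
  have hbdry : (1 : ℝ) ≤ (edgeBoundary brickGraph H).card := by
    exact_mod_cast (edgeBoundary_brickGraph_nonempty hH).card_pos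
  have hvolume : (volume (g '' brickRegion (H : Set (ℤ × ℤ)))).toReal = 2 * D ^ 2 * H.card := by
    rw [volume_image_gridHomeo, volume_brickRegion]
    simp only [ENNReal.toReal_mul, ENNReal.toReal_ofReal (sq_nonneg D), ENNReal.toReal_ofNat,
      ENNReal.toReal_natCast]
    ring
  have hle : ENNReal.ofReal |((X ∩ g '' brickRegion (H : Set (ℤ × ℤ))).ncard : ℝ) -
        ρ * (volume (g '' brickRegion (H : Set (ℤ × ℤ)))).toReal| ≤
      ENNReal.ofReal (c₁ + c₂ * (D * (edgeBoundary brickGraph H).card)) := by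
    rw [ENNReal.ofReal_add h₁ (by positivity), ENNReal.ofReal_mul h₂]
    exact (h _ ((isCompact_brickRegion H.finite_toSet).image g.continuous)
      ⟨(g.image _).symm.trans e⟩).trans
      (by gcongr; exact hausdorffMeasure_frontier_image_brickRegion_le hD H)
  rw [ENNReal.ofReal_le_ofReal_iff (by positivity), hvolume, ← mul_assoc] at hle
  calc _ ≤ c₁ + c₂ * (D * (edgeBoundary brickGraph H).card) := hle
    _ ≤ (c₁ + c₂ * D) * (edgeBoundary brickGraph H).card := by nlinarith

theorem IsOffGrid.abs_sum_ncard_sub_le {ρ c₁ c₂ : ℝ} (hs : IsOffGrid X s D)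
    (hX : ∀ s, Bornology.IsBounded s → (X ∩ s).Finite) (h₁ : 0 ≤ c₁) (h₂ : 0 ≤ c₂)
    (h : HasDiscrepancyLE X ρ c₁ c₂) (H : Finset (ℤ × ℤ)) :
    |∑ v ∈ H, ((((fun x : X => brickOf s hD x) ⁻¹' {v}).ncard : ℝ) - ρ * (2 * D ^ 2))| ≤
      (c₁ + c₂ * D) * (edgeBoundary brickGraph H).card := by
  refine abs_sum_le_card_edgeBoundary (by positivity)
    (fun _ => edgeBoundary_brickGraph_nonempty) (fun S hS hSc hSh => ?_) H
  convert abs_ncard_sub_le_of_hasDiscrepancyLE (s := s) hD h₁ h₂ h hS hSc hSh using 2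
  rw [hs.ncard_inter_image_brickRegion hD, ncard_preimage_finset (finite_preimage_brickOf hD hX),
    Finset.sum_sub_distrib, Finset.sum_const, nsmul_eq_mul, Nat.cast_sum, mul_comm (S.card : ℝ)]

end Count

/-! ### Matching with a square lattice -/

theorem encard_preimage_brickIndex_div {m : ℕ} (hm : 0 < m) (v : ℤ × ℤ) :
    ((fun p : ℤ × ℤ => brickIndex ((p.1 : ℝ) / m, (p.2 : ℝ) / m)) ⁻¹' {v}).encard =
      (2 * m ^ 2 : ℕ) := by
  have hm' : (0 : ℝ) < m := by exact_mod_cast hm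
  have hbox : (fun p : ℤ × ℤ => brickIndex ((p.1 : ℝ) / m, (p.2 : ℝ) / m)) ⁻¹' {v} =
      ↑(Finset.Ico (v.1 * m) ((v.1 + 1) * m) ×ˢ
        Finset.Ico ((2 * v.2 + v.1) * m) ((2 * v.2 + v.1 + 2) * m)) := by
    ext p
    simp only [Set.mem_preimage, Set.mem_singleton_iff, brickIndex_eq_iff, le_div_iff₀ hm',
      div_lt_iff₀ hm', Finset.coe_product, Finset.coe_Ico, Set.mem_prod, Set.mem_Ico]
    norm_cast
  rw [hbox, Set.encard_coe_eq_coe_finsetCard, Finset.card_product, Int.card_Ico, Int.card_Ico,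
    ← sub_mul, ← sub_mul, add_sub_cancel_left, add_sub_cancel_left]
  norm_cast
  ring

/-- The points of the plane with integer coordinates as pairs of integers. -/
noncomputable def integerPointsEquiv : ℤ × ℤ ≃ {x : Plane | ∀ i, ∃ m : ℤ, x i = m} where
  toFun p := ⟨!₂[(p.1 : ℝ), (p.2 : ℝ)], fun i => by fin_cases i <;> simp⟩
  invFun x := (⌊(x : Plane) 0⌋, ⌊(x : Plane) 1⌋)
  left_inv p := by simp
  right_inv x := by
    obtain ⟨x, hx⟩ := x
    ext i
    obtain ⟨n, hn⟩ := hx i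
    fin_cases i <;> simp_all

theorem exists_bijective_dist_gridHomeo_le {X : Set Plane} {ρ c₁ c₂ D : ℝ} {m : ℕ} (hm : 0 < m)
    (hD : 0 < D) (hρ : ρ * D ^ 2 = m ^ 2) (hmD : 6 * (c₁ + c₂ * D) ≤ 2 * m ^ 2)
    (hX : ∀ s, Bornology.IsBounded s → (X ∩ s).Finite) (h₁ : 0 ≤ c₁) (h₂ : 0 ≤ c₂)
    (h : HasDiscrepancyLE X ρ c₁ c₂) :
    ∃ b : X → ℤ × ℤ, b.Bijective ∧ ∃ C, ∀ x : X,
      dist (gridHomeo 0 D hD.ne' ((b x).1 / m, (b x).2 / m)) (x : Plane) ≤ C := by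
  obtain ⟨s, hs⟩ := exists_isOffGrid (countable_of_finite_inter_bounded hX) hD.ne'
  obtain ⟨b, hb, hadj⟩ := exists_bijective_adj_of_discrepancy (G := brickGraph)
    (k := 2 * m ^ 2) (C := c₁ + c₂ * D) (by positivity) degree_brickGraph_le
    (by push_cast; linarith) (finite_preimage_brickOf hD hX) (encard_preimage_brickIndex_div hm)
    (fun H => by
      convert hs.abs_sum_ncard_sub_le hD hX h₁ h₂ h H using 5
      push_cast
      linarith)
  refine ⟨b, hb, ‖s‖ + 2 * D * 4, fun x => ?_⟩
  set q : ℝ × ℝ := ((b x).1 / m, (b x).2 / m)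
  set z := (gridHomeo s D hD.ne').symm x
  calc dist (gridHomeo 0 D hD.ne' q) (x : Plane)
      = dist (gridHomeo 0 D hD.ne' q) (gridHomeo s D hD.ne' z) := by
        rw [Homeomorph.apply_symm_apply]
    _ ≤ dist (gridHomeo 0 D hD.ne' q) (gridHomeo s D hD.ne' q) +
          dist (gridHomeo s D hD.ne' q) (gridHomeo s D hD.ne' z) := dist_triangle _ _ _
    _ ≤ ‖s‖ + 2 * D * 4 := by
      rw [dist_comm, dist_gridHomeo_zero]
      gcongr
      refine (dist_gridHomeo_le hD q z).trans ?_
      rw [dist_comm]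
      gcongr
      exact dist_le_of_mem_brick (hadj x) (mem_brick_brickIndex z) (mem_brick_brickIndex q)

theorem exists_nat_pos_add_mul_le_sq (a b : ℝ) : ∃ m : ℕ, 0 < m ∧ a + b * m ≤ (m : ℝ) ^ 2 := by
  obtain ⟨m, hm⟩ := exists_nat_ge (|a| + |b| + 1)
  have hm₁ : (1 : ℝ) ≤ m := by linarith [abs_nonneg a, abs_nonneg b]
  refine ⟨m, by exact_mod_cast hm₁, ?_⟩
  nlinarith [le_abs_self a, le_abs_self b, abs_nonneg a, abs_nonneg b]

theorem exists_lattice_of_hasDiscrepancyLE {X : Set Plane} {ρ c₁ c₂ : ℝ} (hρ : 0 < ρ)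
    (hX : ∀ s, Bornology.IsBounded s → (X ∩ s).Finite) (h₁ : 0 ≤ c₁) (h₂ : 0 ≤ c₂)
    (h : HasDiscrepancyLE X ρ c₁ c₂) :
    ∃ A : Plane ≃ₗ[ℝ] Plane, |LinearMap.det (A : Plane →ₗ[ℝ] Plane)| = 1 / ρ ∧
      ∃ b : X ≃ (A '' {x : Plane | ∀ i, ∃ m : ℤ, x i = m} : Set Plane), ∃ C : ℝ,
        ∀ x : X, ‖(b x : Plane) - x‖ ≤ C := by
  let t := (√ρ)⁻¹
  have ht : 0 < t := by positivity
  have hρt : ρ * t ^ 2 = 1 := by rw [inv_pow, Real.sq_sqrt hρ.le, mul_inv_cancel₀ hρ.ne']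
  obtain ⟨m, hm, hmt⟩ := exists_nat_pos_add_mul_le_sq (3 * c₁) (3 * c₂ * t)
  have hm' : (0 : ℝ) < m := by exact_mod_cast hm
  obtain ⟨b, hb, C, hC⟩ := exists_bijective_dist_gridHomeo_le hm (mul_pos hm' ht)
    (by linear_combination (m : ℝ) ^ 2 * hρt) (by linarith) hX h₁ h₂ h
  let A := LinearEquiv.smulOfNeZero ℝ Plane t ht.ne'
  refine ⟨A, ?_, (Equiv.ofBijective b hb).trans (integerPointsEquiv.trans (A.toEquiv.image _)), C,
    fun x => ?_⟩
  · have hA : (A : Plane →ₗ[ℝ] Plane) = t • LinearMap.id := rfl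
    rw [hA, LinearMap.det_smul, LinearMap.det_id, mul_one, finrank_euclideanSpace_fin,
      abs_of_pos (by positivity), eq_div_iff hρ.ne', mul_comm, hρt]
  · rw [← dist_eq_norm]
    refine (congrArg (dist · (x : Plane)) (PiLp.ext fun i => ?_)).trans_le (hC x)
    change t * !₂[((b x).1 : ℝ), ((b x).2 : ℝ)] i = _
    fin_cases i <;> simp [gridHomeo_apply] <;> field_simp

/-! ### The equivalence -/

theorem exists_hasDiscrepancyLE_of_equiv_image {X : Set Plane} {ρ : ℝ} (hρ : 0 < ρ)
    (hX : ∀ s, Bornology.IsBounded s → (X ∩ s).Finite) {A : Plane ≃ₗ[ℝ] Plane}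
    (hA : |LinearMap.det (A : Plane →ₗ[ℝ] Plane)| = 1 / ρ)
    (b : X ≃ (A '' {x : Plane | ∀ i, ∃ m : ℤ, x i = m} : Set Plane)) {C : ℝ}
    (hC : ∀ x, ‖(b x : Plane) - x‖ ≤ C) : ∃ c > 0, HasDiscrepancyLE X ρ c c := by
  obtain ⟨D, own, h⟩ : ∃ D own, IsAllocation volume
      (A '' {x : Plane | ∀ i, ∃ m : ℤ, x i = m}) (ENNReal.ofReal (1 / ρ)) D own := by
    rw [← hA, ← mul_one (ENNReal.ofReal _)]
    exact ⟨_, _, isAllocation_floor.image A.toContinuousLinearEquiv⟩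
  exact exists_hasDiscrepancyLE_of_isAllocation hρ hX (h.comp_equiv b hC)

theorem finite_inter_of_forall_le_dist {α : Type*} [MetricSpace α] [ProperSpace α]
    {X : Set α} {δ : ℝ} (hδ : 0 < δ) (hX : ∀ x ∈ X, ∀ y ∈ X, x ≠ y → δ ≤ dist x y) (s : Set α)
    (hs : Bornology.IsBounded s) : (X ∩ s).Finite := by
  have hdisc : DiscreteTopology X := .of_forall_le_dist hδ fun x y hxy =>
    hX x x.2 y y.2 (Subtype.coe_ne_coe.2 hxy)
  rw [Set.inter_comm]
  exact Metric.finite_isBounded_inter_isClosed hdisc.isDiscrete hs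
    (Metric.isClosed_of_pairwise_le_dist hδ fun x hx y hy => hX x hx y hy)

end Laczkovich

theorem laczkovich_dim_two_general
    (X : Set (EuclideanSpace ℝ (Fin 2)))
    (hX : ∀ s, Bornology.IsBounded s → (X ∩ s).Finite)
    (ρ : ℝ) (hρ : 0 < ρ) :
    (∃ L : Set (EuclideanSpace ℝ (Fin 2)),
      (∃ A : EuclideanSpace ℝ (Fin 2) ≃ₗ[ℝ] EuclideanSpace ℝ (Fin 2),
        L = ⇑A '' {x : EuclideanSpace ℝ (Fin 2) | ∀ i, ∃ m : ℤ, x i = (m : ℝ)} ∧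
        |LinearMap.det (A : EuclideanSpace ℝ (Fin 2) →ₗ[ℝ] EuclideanSpace ℝ (Fin 2))| = 1 / ρ) ∧
      ∃ b : X ≃ L, ∃ C : ℝ, ∀ x : X,
        ‖(b x : EuclideanSpace ℝ (Fin 2)) - (x : EuclideanSpace ℝ (Fin 2))‖ ≤ C) ↔
    (∃ c₁ > (0 : ℝ), ∃ c₂ > (0 : ℝ), ∀ U : Set (EuclideanSpace ℝ (Fin 2)),
      IsCompact U →
      Nonempty (U ≃ₜ (Metric.closedBall (0 : EuclideanSpace ℝ (Fin 2)) 1 : Set _)) →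
      ENNReal.ofReal |((X ∩ U).ncard : ℝ) - ρ * (volume U).toReal| ≤
        ENNReal.ofReal c₁ +
          ENNReal.ofReal c₂ * Measure.hausdorffMeasure 1 (frontier U)) := by
  constructor
  · rintro ⟨_, ⟨A, rfl, hA⟩, b, C, hC⟩
    obtain ⟨c, hc, h⟩ := Laczkovich.exists_hasDiscrepancyLE_of_equiv_image hρ hX hA b hC
    exact ⟨c, hc, c, hc, h⟩
  · rintro ⟨c₁, h₁, c₂, h₂, h⟩
    obtain ⟨A, hA, b, C, hC⟩ :=
      Laczkovich.exists_lattice_of_hasDiscrepancyLE hρ hX h₁.le h₂.le h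
    exact ⟨_, ⟨A, rfl, hA⟩, b, C, hC⟩

/-- **Laczkovich's theorem in dimension 2** (Theorem 1.2 of the paper). A countable,
uniformly discrete set `X ⊆ ℝ²` with well-defined density `ρ > 0` is of bounded displacement
from a lattice of density `ρ` iff there are constants `c₁, c₂ > 0` such that for every
topological disk `U`, `|#(X ∩ U) - ρ·vol(U)| ≤ c₁ + c₂·H¹(∂U)`. -/
theorem laczkovich_dim_two
    (X : Set (EuclideanSpace ℝ (Fin 2)))
    (hcount : X.Countable)
    (hud : ∃ δ > 0, ∀ x ∈ X, ∀ y ∈ X, x ≠ y → δ ≤ dist x y)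
    (ρ : ℝ) (hρ : 0 < ρ)
    (hdens : Filter.Tendsto
      (fun R : ℝ => ((X ∩ Metric.closedBall 0 R).ncard : ℝ) /
        (volume (Metric.closedBall (0 : EuclideanSpace ℝ (Fin 2)) R)).toReal)
      Filter.atTop (nhds ρ)) :
    (∃ L : Set (EuclideanSpace ℝ (Fin 2)),
      (∃ A : EuclideanSpace ℝ (Fin 2) ≃ₗ[ℝ] EuclideanSpace ℝ (Fin 2),
        L = ⇑A '' {x : EuclideanSpace ℝ (Fin 2) | ∀ i, ∃ m : ℤ, x i = (m : ℝ)} ∧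
        |LinearMap.det (A : EuclideanSpace ℝ (Fin 2) →ₗ[ℝ] EuclideanSpace ℝ (Fin 2))| = 1 / ρ) ∧
      ∃ b : X ≃ L, ∃ C : ℝ, ∀ x : X,
        ‖(b x : EuclideanSpace ℝ (Fin 2)) - (x : EuclideanSpace ℝ (Fin 2))‖ ≤ C) ↔
    (∃ c₁ > (0 : ℝ), ∃ c₂ > (0 : ℝ), ∀ U : Set (EuclideanSpace ℝ (Fin 2)),
      IsCompact U →
      Nonempty (U ≃ₜ (Metric.closedBall (0 : EuclideanSpace ℝ (Fin 2)) 1 : Set _)) →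
      ENNReal.ofReal |((X ∩ U).ncard : ℝ) - ρ * (volume U).toReal| ≤
        ENNReal.ofReal c₁ +
          ENNReal.ofReal c₂ * Measure.hausdorffMeasure 1 (frontier U)) := by
  obtain ⟨δ, hδ, hsep⟩ := hud
  exact laczkovich_dim_two_general X (Laczkovich.finite_inter_of_forall_le_dist hδ hsep) ρ hρ
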